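/- Let F be a free group, let H and K be finitely generated subgroups of F, and let S ⊆ F be a set of double coset representatives for (H,K). Let L = ⟨H, K, S⟩ and suppose neither H nor K has finite index in L. Then there exist a free group F₂ of rank 2, subgroups H', K' ≤ F₂, and an injective map s ↦ s' from S into F₂ such that: H' is isomorphic to H; K' is isomorphic to K; the set S' = {s' : s ∈ S} is a set of double coset representatives for (H', K') in F₂; for every s ∈ S the group H' ∩ s'K'(s')⁻¹ is isomorphic to H ∩ sKs⁻¹; and ⟨H', K', S'⟩ = F₂. In particular, the generalized join of two finitely generated subgroups, neither of finite index in it, can always be realized as a subgroup-configuration generating a free group of rank 2, preserving the ranks of H, K, of all the intersections H ∩ sKs⁻¹ (s ∈ S), and the cardinality of S. -/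

import Mathlib

/-!
The group `L` is free by the Nielsen–Schreier theorem, and it is not cyclic: in a cyclic group a
subgroup of infinite index is trivial, so `H`, `K` and then `L` would be trivial. It suffices to find
a surjection `ρ` from `L` onto the free group of rank two which is injective on `H` and on `K` and
creates no new coincidences: whenever `g` conjugates an element of `ρ(K)` to a nontrivial element of
`ρ(H)`, there is one `x` with `ρ x = g` such that every relation `ρ h = g (ρ k) g⁻¹` comes from
`h = x k x⁻¹` (`Lifts`). Such an `x` is unique, since two of them differ by an element commuting with
some `k ≠ 1`, commuting elements of a free group have common powers, and `ρ` is injective on `K`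
(`Lifts.eq_of_conj`). Therefore `ρ(H)`, `ρ(K)` and `ρ(S)` have all the properties required.

The map `ρ` is built in two steps.

*A sparse basis element.* The free group acts on the disjoint union of the coset spaces of `H` and
`K`, which has no nonempty finite invariant subset since both indices are infinite. As `H` and `K`
are finitely generated, all periodic trajectories of cyclically reduced words stay inside one finite
set (`exists_periodic_core`). Among all images of basis elements under automorphisms choose `y` with
the fewest periodic points. For another basis element `i` and a suitable `N`, the periodic points of
`y ^ N * i` are periodic for `y` and are mapped into themselves by `i` (`exists_transvection`); by
minimality the periodic points of `y` form a finite invariant set, which is empty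
(`exists_aperiodic`). So no conjugate of a nonzero power of `y` lies in `H` or `K`, and the
exponents of `y` in reduced words of `H` and of `K` are bounded by some `D` (`exists_bd`).

*Coding and merging.* Write `y` as `none`. Pick a basis element `i₀ ≠ y`, choose distinct numbers
`N i` with `N i₀ = 0`, and let `emb` replace every basis element `i ≠ y, i₀` by
`y ^ M * c * y ^ (-M) * d * y ^ M` with `M = (D + 1) * N i`, where `c` and `d` are new letters
depending on `i`, and `i₀` by a single new letter. Let `merge` identify all letters other than `y`;
then `ρ` is `merge ∘ emb`. The exponents of `y` on both sides of a letter of a coded word, with the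
signs of the letters, determine the letter (`CAdm.det`), and an exponent zero never separates letters
of opposite sign (`CAdm.zero`). So `merge` takes reduced words of the images of `H` and `K` to
reduced words, and the interior of such a word is recovered from its image (`middle_eq`).

To lift a conjugator `w` (`merge_lift`), shorten it by moving the base points of the two subgroups as
long as its first or last letter cancels. If `w` cannot be shortened and is not empty, then both
sides of `h w = w k` are reduced, so `w` begins like `h` and could be shortened after all. If `w` is
empty, one pair of words with the same image is made cyclically reduced, and its two members, placed
at both ends of any other pair with equal images, put that pair into the interior, which forces it
to coincide (`merge_base`). Finally the retraction `retr` of `emb`, which satisfies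
`merge ∘ emb ∘ retr = merge`, brings the lifted conjugator back to the original group.
-/

/-- The conjugate subgroup `g K g⁻¹`. -/
def conjSubgroup {G : Type*} [Group G] (g : G) (K : Subgroup G) : Subgroup G :=
  K.map (MulAut.conj g).toMonoidHom

/-- `a` and `b` lie in the same double coset `H a K = H b K`. -/
def DosetEq {G : Type*} [Group G] (H K : Subgroup G) (a b : G) : Prop :=
  ∃ h ∈ H, ∃ k ∈ K, b = h * a * k

/-- `S` is a set of double coset representatives for `(H, K)`. -/
def IsDCRep {G : Type*} [Group G] (H K : Subgroup G) (S : Set G) : Prop :=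
  (∀ s ∈ S, H ⊓ conjSubgroup s K ≠ ⊥) ∧
  (∀ s ∈ S, ∀ s' ∈ S, s ≠ s' → ¬ DosetEq H K s s') ∧
  (∀ g : G, H ⊓ conjSubgroup g K ≠ ⊥ → ∃ s ∈ S, DosetEq H K g s)

/-! ### Reduced words and their behaviour at a cancelled letter -/

namespace FreeGroup.GenJoin

section Words
variable {α : Type*}

lemma exists_reduced (x : FreeGroup α) : ∃ w, IsReduced w ∧ mk w = x := by
  classical
  exact ⟨x.toWord, isReduced_toWord, mk_toWord⟩

lemma eq_of_mk_eq {u v : List (α × Bool)} (hu : IsReduced u) (hv : IsReduced v)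
    (h : mk u = mk v) : u = v := by
  classical
  have := reduce.sound h
  rwa [hu.reduce_eq, hv.reduce_eq] at this

lemma eq_nil_of_mk_eq_one {u : List (α × Bool)} (hu : IsReduced u) (h : mk u = 1) : u = [] :=
  eq_of_mk_eq hu IsReduced.nil h

lemma isReduced_append {u v : List (α × Bool)} :
    IsReduced (u ++ v) ↔ IsReduced u ∧ IsReduced v ∧
      ∀ a ∈ u.getLast?, ∀ b ∈ v.head?, a.1 = b.1 → a.2 = b.2 := by
  unfold IsReduced; exact List.isChain_append

lemma _root_.FreeGroup.IsReduced.factor {u w : List (α × Bool)} (h : IsReduced w)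
    (hu : u <:+: w) : IsReduced u := by
  obtain ⟨s, t, rfl⟩ := hu
  exact (isReduced_append.1 (isReduced_append.1 h).1).2.1

lemma isReduced_invRev {u : List (α × Bool)} (hu : IsReduced u) : IsReduced (invRev u) := by
  classical
  rw [isReduced_iff_reduce_eq, reduce_invRev, hu.reduce_eq]

/-- The formal inverse of a letter. -/
abbrev linv (a : α × Bool) : α × Bool := (a.1, !a.2)

lemma linv_linv (a : α × Bool) : linv (linv a) = a := by simp [linv]

lemma mk_linv (a : α × Bool) : mk [linv a] = (mk [a])⁻¹ := by
  simp [invRev]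

lemma invRev_cons' (a : α × Bool) (v : List (α × Bool)) :
    invRev (a :: v) = invRev v ++ [linv a] := by
  simp [invRev]

lemma invRev_concat' (a : α × Bool) (v : List (α × Bool)) :
    invRev (v ++ [a]) = linv a :: invRev v := by
  simp [invRev]

lemma mk_cons' (a : α × Bool) (v : List (α × Bool)) : mk (a :: v) = mk [a] * mk v := by
  simp

lemma cancel_of_not {a b : α × Bool} (h : ¬ (a.1 = b.1 → a.2 = b.2)) : b = linv a := by
  obtain ⟨a1, a2⟩ := a
  obtain ⟨b1, b2⟩ := b
  simp only [Classical.not_imp] at h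
  obtain ⟨h1, h2⟩ := h
  ext
  · exact h1.symm
  · cases a2 <;> cases b2 <;> simp_all

lemma cancel_of_not' {a b : α × Bool} (h : ¬ (a.1 = b.1 → a.2 = b.2)) : a = linv b := by
  rw [cancel_of_not h, linv_linv]

lemma not_reduced_cancel (a : α × Bool) : ¬ IsReduced [linv a, a] := by
  simp [IsReduced, linv]

lemma cons_cases {w : List (α × Bool)} (hw : IsReduced w) (a : α × Bool) :
    (∃ w1, w = linv a :: w1) ∨ IsReduced (a :: w) := by
  cases w with
  | nil => exact Or.inr IsReduced.singleton
  | cons b w =>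
    by_cases h : a.1 = b.1 → a.2 = b.2
    · exact Or.inr (isReduced_cons_cons.2 ⟨h, hw⟩)
    · exact Or.inl ⟨w, by rw [cancel_of_not h]⟩

lemma concat_cases {w : List (α × Bool)} (hw : IsReduced w) (a : α × Bool) :
    (∃ w1, w = w1 ++ [linv a]) ∨ IsReduced (w ++ [a]) := by
  rcases List.eq_nil_or_concat' w with rfl | ⟨w, b, rfl⟩
  · exact Or.inr IsReduced.singleton
  · by_cases h : b.1 = a.1 → b.2 = a.2
    · exact Or.inr (isReduced_append.2 ⟨hw, IsReduced.singleton, by simpa using h⟩)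
    · exact Or.inl ⟨w, by rw [cancel_of_not' h]⟩

/-- The conjugate `s⁻¹ H s`, where `s` is a letter: the subgroup obtained by moving the base point
of `H` across one edge. -/
def pull (a : α × Bool) (H : Subgroup (FreeGroup α)) : Subgroup (FreeGroup α) :=
  H.comap (MulAut.conj (mk [a])).toMonoidHom

lemma mem_pull {a : α × Bool} {H : Subgroup (FreeGroup α)} {x : FreeGroup α} :
    x ∈ pull a H ↔ mk [a] * x * (mk [a])⁻¹ ∈ H := Iff.rfl

/-- Moving the base point of `H` along a letter `a` that starts a reduced word of `H` does not
enlarge the set of factors of reduced words of elements of `H`. -/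
lemma factor_of_pull {H : Subgroup (FreeGroup α)} {a : α × Bool} {v : List (α × Bool)}
    (hv : IsReduced (a :: v)) (hvH : mk (a :: v) ∈ H) {w : List (α × Bool)} (hw : IsReduced w)
    (hwH : mk w ∈ pull a H) : ∃ u, IsReduced u ∧ mk u ∈ H ∧ w <:+: u := by
  rw [mem_pull] at hwH
  have hr := concat_cases hw (linv a)
  rw [linv_linv] at hr
  rcases cons_cases hw a with ⟨w1, rfl⟩ | hl
  · rcases hr with ⟨w2, h2⟩ | hr
    · -- both ends cancel: conjugate back by the whole word `a :: v`
      have hva : IsReduced (invRev v ++ [linv a]) := invRev_cons' a v ▸ isReduced_invRev hv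
      refine ⟨invRev v ++ (linv a :: w1) ++ v, ?_, ?_, ⟨invRev v, v, rfl⟩⟩
      · refine IsReduced.append_overlap ?_ ?_ (by simp)
        · have := IsReduced.append_overlap hva (L₃ := w1) (by simpa using hw) (by simp)
          simpa using this
        · rw [h2]
          exact IsReduced.append_overlap (h2 ▸ hw) hv (by simp)
      · have e : mk (invRev v ++ (linv a :: w1) ++ v) =
            (mk (a :: v))⁻¹ * (mk [a] * mk (linv a :: w1) * (mk [a])⁻¹) * mk (a :: v) := by
          rw [← mul_mk, ← mul_mk, ← inv_mk, mk_cons' a v]; group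
        rw [e]
        exact H.mul_mem (H.mul_mem (H.inv_mem hvH) hwH) hvH
    · have e : mk [a] * mk (linv a :: w1) * (mk [a])⁻¹ = mk (w1 ++ [linv a]) := by
        rw [← mul_mk, mk_linv, mk_cons' (linv a) w1, mk_linv]; group
      rw [e] at hwH
      refine ⟨w1 ++ [linv a] ++ (w1 ++ [linv a]), ?_, ?_, ⟨w1, [linv a], by simp⟩⟩
      · refine IsReduced.append_overlap (hr.factor ⟨[linv a], [], by simp⟩) ?_ (by simp)
        simpa using hr
      · rw [← mul_mk]
        exact H.mul_mem hwH hwH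
  · rcases hr with ⟨w1, rfl⟩ | hr
    · have e : mk [a] * mk (w1 ++ [a]) * (mk [a])⁻¹ = mk (a :: w1) := by
        rw [← mul_mk, mk_cons' a w1]; group
      rw [e] at hwH
      refine ⟨(a :: w1) ++ [a] ++ w1, ?_, ?_, ⟨[a], w1, by simp⟩⟩
      · refine IsReduced.append_overlap (by simpa using hl) ?_ (by simp)
        exact hl.factor ⟨[], [a], by simp⟩
      · have : (a :: w1) ++ [a] ++ w1 = (a :: w1) ++ (a :: w1) := by simp
        rw [this, ← mul_mk]
        exact H.mul_mem hwH hwH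
    · rcases eq_or_ne w [] with rfl | hne
      · exact ⟨[], IsReduced.nil, H.one_mem, List.infix_rfl⟩
      · refine ⟨[a] ++ w ++ [linv a], IsReduced.append_overlap hl hr hne, ?_,
          ⟨[a], [linv a], rfl⟩⟩
        rwa [← mul_mk, ← mul_mk, mk_linv]

end Words
end FreeGroup.GenJoin

/-! ### Good subgroups and the merging homomorphism -/

namespace FreeGroup.GenJoin

section Merge
variable {Z : Type*}

/-- The sum of the signs of the letters of a word: the exponent of a word in the single letter
`none`. -/
def expsum {α : Type*} (ys : List (α × Bool)) : ℤ := (ys.map fun a => if a.2 then 1 else -1).sum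

/-- Every two consecutive non-`none` letters of `w`, together with the exponent of `none` between
them, satisfy `Adm`. -/
def Good (Adm : Z × Bool → ℤ → Z × Bool → Prop) (w : List (Option Z × Bool)) : Prop :=
  ∀ p z e ys z' e' q, w = p ++ (some z, e) :: (ys ++ (some z', e') :: q) →
    (∀ a ∈ ys, a.1 = none) → Adm (z, e) (expsum ys) (z', e')

/-- All reduced words of elements of `H` are good. -/
def GoodSub (Adm : Z × Bool → ℤ → Z × Bool → Prop) (H : Subgroup (FreeGroup (Option Z))) : Prop :=
  ∀ w, IsReduced w → mk w ∈ H → Good Adm w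

/-- The map on letters that keeps `none` and merges all the letters `some z` into one. -/
def lm (a : Option Z × Bool) : Option Unit × Bool := (a.1.map fun _ => (), a.2)

/-- The homomorphism of free groups that keeps `none` and merges all the other generators. -/
def merge : FreeGroup (Option Z) →* FreeGroup (Option Unit) :=
  FreeGroup.map fun a => a.map fun _ => ()

lemma merge_mk (w : List (Option Z × Bool)) : merge (mk w) = mk (w.map lm) := by
  simp only [merge, FreeGroup.map.mk]
  rfl

lemma lm_linv (a : Option Z × Bool) : lm (linv a) = linv (lm a) := rfl

lemma map_invRev_lm (w : List (Option Z × Bool)) : (invRev w).map lm = invRev (w.map lm) := by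
  simp only [invRev, List.map_reverse, List.map_map]
  rfl

lemma expsum_map (ys : List (Option Z × Bool)) : expsum (ys.map lm) = expsum ys := by
  simp only [expsum, List.map_map]
  rfl

lemma lm_fst_none {a : Option Z × Bool} : (lm a).1 = none ↔ a.1 = none := by
  simp [lm]

lemma isReduced_of_map {w : List (Option Z × Bool)} (h : IsReduced (w.map lm)) : IsReduced w := by
  unfold IsReduced at *
  rw [List.isChain_map] at h
  exact h.imp fun a b hab e => hab (by simp [lm, e])

variable {Adm : Z × Bool → ℤ → Z × Bool → Prop}

lemma Good.factor {u w : List (Option Z × Bool)} (h : Good Adm w) (hu : u <:+: w) : Good Adm u := by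
  obtain ⟨s, t, rfl⟩ := hu
  rintro p z e ys z' e' q rfl hys
  exact h (s ++ p) z e ys z' e' (q ++ t) (by simp) hys

lemma Good.isReduced_map (hR : ∀ z e z' e', Adm (z, e) 0 (z', e') → e = e')
    {w : List (Option Z × Bool)} (h : Good Adm w) (hw : IsReduced w) : IsReduced (w.map lm) := by
  unfold IsReduced at *
  rw [List.isChain_map]
  rw [List.isChain_iff_forall_rel_of_append_cons_cons] at *
  rintro ⟨a, e⟩ ⟨b, e'⟩ p q hpq hab
  have hred := @hw (a, e) (b, e') p q hpq
  match a, b with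
  | none, none => exact hred rfl
  | none, some z => simp [lm] at hab
  | some z, none => simp [lm] at hab
  | some z, some z' => exact hR _ _ _ _ (h p z e [] z' e' q hpq (by simp))

lemma exists_last_some {α : Type*} {p : List (Option α × Bool)} (h : ∃ a ∈ p, a.1 ≠ none) :
    ∃ p0 z e ys, p = p0 ++ (some z, e) :: ys ∧ ∀ a ∈ ys, a.1 = none := by
  induction p using List.reverseRecOn with
  | nil => simp at h
  | append_singleton p a ih =>
    obtain ⟨a, e⟩ := a
    cases a with
    | some z => exact ⟨p, z, e, [], rfl, by simp⟩
    | none =>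
      obtain ⟨p0, z, e1, ys, rfl, hys⟩ := ih (by simpa [or_and_right, exists_or] using h)
      refine ⟨p0, z, e1, ys ++ [(none, e)], by simp, ?_⟩
      intro a ha
      rcases List.mem_append.1 ha with ha | ha
      · exact hys a ha
      · rw [List.mem_singleton.1 ha]

lemma exists_first_some {α : Type*} {p : List (Option α × Bool)} (h : ∃ a ∈ p, a.1 ≠ none) :
    ∃ ys z e q, p = ys ++ (some z, e) :: q ∧ ∀ a ∈ ys, a.1 = none := by
  induction p with
  | nil => simp at h
  | cons a p ih =>
    obtain ⟨a, e⟩ := a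
    cases a with
    | some z => exact ⟨[], z, e, p, rfl, by simp⟩
    | none =>
      obtain ⟨ys, z, e1, q, rfl, hys⟩ := ih (by simpa [or_and_right, exists_or] using h)
      refine ⟨(none, e) :: ys, z, e1, q, by simp, ?_⟩
      intro a ha
      rcases List.mem_cons.1 ha with ha | ha
      · rw [ha]
      · exact hys a ha

lemma lm_eq_some {a : Option Z × Bool} {e : Bool} (h : lm a = (some (), e)) :
    ∃ z, a = (some z, e) := by
  obtain ⟨a, e'⟩ := a
  cases a <;> simp_all [lm]

lemma forall_none_of_map {ys ys' : List (Option Z × Bool)} (h : ys.map lm = ys'.map lm)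
    (hys : ∀ a ∈ ys, a.1 = none) : ∀ a ∈ ys', a.1 = none := by
  intro a ha
  have : lm a ∈ ys.map lm := h ▸ List.mem_map_of_mem ha
  obtain ⟨b, hb, hab⟩ := List.mem_map.1 this
  rw [← lm_fst_none, ← hab, lm_fst_none]
  exact hys b hb

/-- A letter of a good word that has non-`none` letters on both sides can be recovered from the
merged word. -/
lemma letter_eq (hD : ∀ z₁ e₁ k z₂ e₂ l z₃ e₃ z₁' z₂' z₃', Adm (z₁, e₁) k (z₂, e₂) →
      Adm (z₂, e₂) l (z₃, e₃) → Adm (z₁', e₁) k (z₂', e₂) → Adm (z₂', e₂) l (z₃', e₃) → z₂ = z₂')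
    {p p' q q' : List (Option Z × Bool)} {x x' : Option Z × Bool}
    (h : Good Adm (p ++ x :: q)) (h' : Good Adm (p' ++ x' :: q'))
    (hp : p.map lm = p'.map lm) (hx : lm x = lm x') (hq : q.map lm = q'.map lm)
    (hps : ∃ a ∈ p, a.1 ≠ none) (hqs : ∃ a ∈ q, a.1 ≠ none) : x = x' := by
  obtain ⟨x, e⟩ := x
  obtain ⟨x', e'⟩ := x'
  obtain rfl : e = e' := congrArg Prod.snd hx
  match x, x' with
  | none, none => rfl
  | none, some z => simp [lm] at hx
  | some z, none => simp [lm] at hx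
  | some z, some z' =>
    obtain ⟨p0, z1, e1, ys, rfl, hys⟩ := exists_last_some hps
    obtain ⟨zs, z3, e3, q0, rfl, hzs⟩ := exists_first_some hqs
    rw [List.map_append, List.map_cons, eq_comm, List.map_eq_append_iff] at hp
    obtain ⟨p0', r, rfl, hp0, hr⟩ := hp
    rw [List.map_eq_cons_iff] at hr
    obtain ⟨b, ys', rfl, hb, hys'⟩ := hr
    obtain ⟨z1', rfl⟩ := lm_eq_some (hb.trans rfl)
    rw [List.map_append, List.map_cons, eq_comm, List.map_eq_append_iff] at hq
    obtain ⟨zs', r, rfl, hzs', hr⟩ := hq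
    rw [List.map_eq_cons_iff] at hr
    obtain ⟨b, q0', rfl, hb, hq0'⟩ := hr
    obtain ⟨z3', rfl⟩ := lm_eq_some (hb.trans rfl)
    have a1 := h p0 z1 e1 ys z e (zs ++ (some z3, e3) :: q0) (by simp) hys
    have a2 := h (p0 ++ (some z1, e1) :: ys) z e zs z3 e3 q0 (by simp) hzs
    have a1' := h' p0' z1' e1 ys' z' e (zs' ++ (some z3', e3) :: q0') (by simp)
      (forall_none_of_map hys'.symm hys)
    have a2' := h' (p0' ++ (some z1', e1) :: ys') z' e zs' z3' e3 q0' (by simp)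
      (forall_none_of_map hzs'.symm hzs)
    rw [← expsum_map, hys', expsum_map] at a1'
    rw [← expsum_map, hzs', expsum_map] at a2'
    rw [hD _ _ _ _ _ _ _ _ _ _ _ a1 a2 a1' a2']

/-- The interior of a good word is determined by the merged word. -/
lemma middle_eq (hD : ∀ z₁ e₁ k z₂ e₂ l z₃ e₃ z₁' z₂' z₃', Adm (z₁, e₁) k (z₂, e₂) →
      Adm (z₂, e₂) l (z₃, e₃) → Adm (z₁', e₁) k (z₂', e₂) → Adm (z₂', e₂) l (z₃', e₃) → z₂ = z₂')
    {q q' : List (Option Z × Bool)} (hq : q.map lm = q'.map lm) (hqs : ∃ a ∈ q, a.1 ≠ none) :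
    ∀ {m m' p p' : List (Option Z × Bool)},
    Good Adm (p ++ m ++ q) → Good Adm (p' ++ m' ++ q') → p.map lm = p'.map lm →
    m.map lm = m'.map lm → (∃ a ∈ p, a.1 ≠ none) → m = m'
  | [], m', p, p', _, _, _, hm, _ => by simpa using hm.symm
  | x :: m, m', p, p', h, h', hp, hm, hps => by
    obtain ⟨x', m', rfl, hx, hm2⟩ := List.map_eq_cons_iff.1 hm.symm
    have hxx : x = x' := by
      refine letter_eq hD (p := p) (p' := p') (q := m ++ q) (q' := m' ++ q') (by simpa using h)
        (by simpa using h') hp hx.symm (by simp [hm2, hq]) hps ?_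
      obtain ⟨a, ha, ha'⟩ := hqs
      exact ⟨a, by simp [ha], ha'⟩
    subst hxx
    congr 1
    refine middle_eq hD hq hqs (p := p ++ [x]) (p' := p' ++ [x]) (by simpa using h)
      (by simpa using h') (by simp [hp]) hm2.symm ?_
    obtain ⟨a, ha, ha'⟩ := hps
    exact ⟨a, by simp [ha], ha'⟩

lemma GoodSub.pull {H : Subgroup (FreeGroup (Option Z))} (h : GoodSub Adm H)
    {a : Option Z × Bool} {v : List (Option Z × Bool)} (hv : IsReduced (a :: v))
    (hvH : mk (a :: v) ∈ H) : GoodSub Adm (pull a H) := by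
  intro w hw hwH
  obtain ⟨u, hu, huH, hwu⟩ := factor_of_pull hv hvH hw hwH
  exact (h u hu huH).factor hwu

/-- No conjugate of a nontrivial power of the generator `none` lies in `H`. -/
def NoPow {α : Type*} (H : Subgroup (FreeGroup (Option α))) : Prop :=
  ∀ (x : FreeGroup (Option α)) (n : ℤ), n ≠ 0 → x * of none ^ n * x⁻¹ ∉ H

lemma NoPow.pull {α : Type*} {H : Subgroup (FreeGroup (Option α))} (h : NoPow H)
    (a : Option α × Bool) : NoPow (pull a H) := by
  intro x n hn hx
  refine h (mk [a] * x) n hn ?_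
  rw [mem_pull] at hx
  convert hx using 1
  group

lemma NoPow.exists_some {α : Type*} {H : Subgroup (FreeGroup (Option α))} (h : NoPow H)
    {w : List (Option α × Bool)} (hw : IsReduced w) (hne : w ≠ []) (hwH : mk w ∈ H) :
    ∃ a ∈ w, a.1 ≠ none := by
  by_contra! hall
  have : ∃ n : ℕ, ∃ e, w = List.replicate (n + 1) (none, e) := by
    clear hwH h
    induction w with
    | nil => exact absurd rfl hne
    | cons a w ih =>
      obtain ⟨a, e⟩ := a
      obtain rfl : a = none := hall (a, e) (by simp)
      cases w with
      | nil => exact ⟨0, e, rfl⟩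
      | cons b w =>
        obtain ⟨n, e', hn⟩ := ih (isReduced_cons_cons.1 hw).2 (by simp)
          (fun a ha => hall a (List.mem_cons_of_mem _ ha))
        have hb : b = (none, e') := by
          rw [List.replicate_succ] at hn
          exact (List.cons.inj hn).1
        have he : e = b.2 := (isReduced_cons_cons.1 hw).1 (by rw [hb])
        rw [hb] at he
        refine ⟨n + 1, e, ?_⟩
        rw [hn, List.replicate_succ (n := n + 1)]
        simp only at he
        rw [he]
  obtain ⟨n, e, rfl⟩ := this
  have e1 : mk (List.replicate (n + 1) ((none : Option α), e)) = mk [(none, e)] ^ (n + 1) := by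
    rw [pow_mk, List.flatten_replicate_singleton]
  rw [e1] at hwH
  cases e with
  | true =>
    refine h 1 (n + 1 : ℕ) (by positivity) ?_
    rw [one_mul, inv_one, mul_one, zpow_natCast]
    exact hwH
  | false =>
    refine h 1 (-(n + 1 : ℕ)) (by simp; omega) ?_
    have e2 : mk [((none : Option α), false)] = (of none)⁻¹ := by simp [of, invRev]
    rw [one_mul, inv_one, mul_one, zpow_neg, zpow_natCast, ← inv_pow, ← e2]
    exact hwH

end Merge
end FreeGroup.GenJoin

/-! ### Lifting conjugators along the merging homomorphism -/

namespace FreeGroup.GenJoin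

section MergeTheorem
variable {Z : Type*} {Adm : Z × Bool → ℤ → Z × Bool → Prop}

/-- A reduced word that is not cyclically reduced is a conjugate by its first letter. -/
lemma not_cyc {α : Type*} {A : List (α × Bool)} (hA : IsReduced A) (hc : ¬ IsReduced (A ++ A)) :
    ∃ a A', A = a :: (A' ++ [linv a]) ∧ A' ≠ [] := by
  rw [isReduced_append] at hc
  simp only [hA, true_and, not_forall] at hc
  obtain ⟨b, hb, a, ha, hab⟩ := hc
  have hba := cancel_of_not' (a := b) (b := a) (by simpa using hab)
  subst hba
  cases A with
  | nil => simp at ha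
  | cons c A =>
    obtain rfl : c = a := by simpa using ha
    rcases List.eq_nil_or_concat' A with rfl | ⟨A', d, rfl⟩
    · have h : c = linv c := by simpa using hb
      have := congrArg Prod.snd h
      simp at this
    · obtain rfl : d = linv c := by
        rw [← List.cons_append, List.getLast?_concat] at hb
        simpa using hb
      refine ⟨c, A', rfl, ?_⟩
      rintro rfl
      simp [IsReduced] at hA

/-- For a cyclically reduced word `w`, one of `w` and `w⁻¹` does not cancel against `u`. -/
lemma cyc_left {α : Type*} {w u : List (α × Bool)} (hw : w ≠ []) (hww : IsReduced (w ++ w))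
    (hu : IsReduced u) : IsReduced (w ++ u) ∨ IsReduced (invRev w ++ u) := by
  obtain ⟨a, w1, rfl⟩ := List.exists_cons_of_ne_nil hw
  obtain ⟨w2, b, h2⟩ := (List.eq_nil_or_concat' (a :: w1)).resolve_left hw
  have hr := isReduced_append.1 hww
  cases u with
  | nil => left; simpa using hr.1
  | cons c u =>
    by_contra! hcon
    obtain ⟨h3, h4⟩ := hcon
    rw [isReduced_append] at h3 h4
    have h5 : ¬ (b.1 = c.1 → b.2 = c.2) := by
      intro h; exact h3 ⟨hr.1, hu, by simpa [h2] using h⟩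
    have h6 : ¬ ((linv a).1 = c.1 → (linv a).2 = c.2) := by
      intro h; exact h4 ⟨isReduced_invRev hr.1, hu, by simpa [invRev_cons'] using h⟩
    have h7 := cancel_of_not h5
    have h8 := cancel_of_not h6
    rw [linv_linv] at h8
    have h9 := hr.2.2 b (by simp [h2]) a (by simp)
    rw [← h8, h7] at h9
    simp at h9

lemma cyc_right {α : Type*} {w u : List (α × Bool)} (hw : w ≠ []) (hww : IsReduced (w ++ w))
    (hu : IsReduced u) : IsReduced (u ++ w) ∨ IsReduced (u ++ invRev w) := by
  rcases cyc_left hw hww (isReduced_invRev hu) with h | h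
  · right
    have := isReduced_invRev h
    rwa [invRev_append, invRev_invRev] at this
  · left
    have := isReduced_invRev h
    rwa [invRev_append, invRev_invRev, invRev_invRev] at this

/-- The part of `merge_lift` with trivial conjugator. The word `A` and its twin `B` are made
cyclically reduced by moving the base points; then `A` and `B` or their inverses serve as contexts in
which all other pairs of words with equal images are forced to coincide. -/
lemma merge_base (hR : ∀ z e z' e', Adm (z, e) 0 (z', e') → e = e')
    (hD : ∀ z₁ e₁ k z₂ e₂ l z₃ e₃ z₁' z₂' z₃', Adm (z₁, e₁) k (z₂, e₂) →
      Adm (z₂, e₂) l (z₃, e₃) → Adm (z₁', e₁) k (z₂', e₂) → Adm (z₂', e₂) l (z₃', e₃) → z₂ = z₂')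
    (n : ℕ) : ∀ (H K : Subgroup (FreeGroup (Option Z))) (A B : List (Option Z × Bool)),
    GoodSub Adm H → GoodSub Adm K → NoPow H → A.length ≤ n → IsReduced A → IsReduced B →
    A ≠ [] → mk A ∈ H → mk B ∈ K → A.map lm = B.map lm →
    ∃ g : FreeGroup (Option Z), merge g = 1 ∧ ∀ h ∈ H, ∀ k ∈ K, merge h = merge k →
      h = g * k * g⁻¹ := by
  induction n with
  | zero => intro H K A B _ _ _ hn _ _ hne; exact absurd (List.length_eq_zero_iff.1 (by omega)) hne
  | succ n ih =>
    intro H K A B gH gK nH hn hA hB hne hAH hBK hAB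
    by_cases hc : IsReduced (A ++ A)
    · refine ⟨1, _root_.map_one _, ?_⟩
      intro h hh k hk hhk
      obtain ⟨X, hX, rfl⟩ := exists_reduced h
      obtain ⟨X', hX', rfl⟩ := exists_reduced k
      rw [merge_mk, merge_mk] at hhk
      have hXX := eq_of_mk_eq ((gH X hX hh).isReduced_map hR hX)
        ((gK X' hX' hk).isReduced_map hR hX') hhk
      have hwne : A.map lm ≠ [] := by simpa using hne
      have hww : IsReduced (A.map lm ++ A.map lm) := by
        rw [← List.map_append]
        refine (gH _ hc ?_).isReduced_map hR hc
        rw [← mul_mk]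
        exact H.mul_mem hAH hAH
      have hXl := (gH X hX hh).isReduced_map hR hX
      rw [one_mul, inv_one, mul_one]
      rcases eq_or_ne X [] with rfl | hXne
      · have : X' = [] := by simpa using hXX.symm
        rw [this]
      -- the pair `A`, `B` or its inverse fits on the left of `X`, and likewise on the right
      have hE : ∃ E E', mk E ∈ H ∧ mk E' ∈ K ∧ E ≠ [] ∧ E.map lm = E'.map lm ∧
          IsReduced (E.map lm ++ X.map lm) := by
        rcases cyc_left hwne hww hXl with h | h
        · exact ⟨A, B, hAH, hBK, hne, hAB, h⟩
        · refine ⟨invRev A, invRev B, ?_, ?_, fun h => hne (by simpa using congrArg List.length h), ?_, ?_⟩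
          · rw [← inv_mk]; exact H.inv_mem hAH
          · rw [← inv_mk]; exact K.inv_mem hBK
          · rw [map_invRev_lm, map_invRev_lm, hAB]
          · rwa [map_invRev_lm]
      have hF : ∃ F F', mk F ∈ H ∧ mk F' ∈ K ∧ F ≠ [] ∧ F.map lm = F'.map lm ∧
          IsReduced (X.map lm ++ F.map lm) := by
        rcases cyc_right hwne hww hXl with h | h
        · exact ⟨A, B, hAH, hBK, hne, hAB, h⟩
        · refine ⟨invRev A, invRev B, ?_, ?_, fun h => hne (by simpa using congrArg List.length h), ?_, ?_⟩
          · rw [← inv_mk]; exact H.inv_mem hAH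
          · rw [← inv_mk]; exact K.inv_mem hBK
          · rw [map_invRev_lm, map_invRev_lm, hAB]
          · rwa [map_invRev_lm]
      obtain ⟨E, E', hEH, hEK, hEne, hEE, hEr⟩ := hE
      obtain ⟨F, F', hFH, hFK, hFne, hFF, hFr⟩ := hF
      have hr : IsReduced ((E ++ X ++ F).map lm) := by
        rw [List.map_append, List.map_append]
        exact hEr.append_overlap hFr (by simpa using hXne)
      have hr' : IsReduced ((E' ++ X' ++ F').map lm) := by
        rw [List.map_append, List.map_append, ← hEE, ← hFF, ← hXX]
        simpa using hr
      have r := isReduced_of_map hr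
      have r' := isReduced_of_map hr'
      have g1 := gH _ r (by
        rw [← mul_mk, ← mul_mk]; exact H.mul_mem (H.mul_mem hEH hh) hFH)
      have g2 := gK _ r' (by
        rw [← mul_mk, ← mul_mk]; exact K.mul_mem (K.mul_mem hEK hk) hFK)
      have sE := nH.exists_some (r.factor ⟨[], X ++ F, by simp⟩) hEne hEH
      have sF := nH.exists_some (r.factor ⟨E ++ X, [], by simp⟩) hFne hFH
      rw [middle_eq hD hFF sF g1 g2 hEE hXX sE]
    · have hc' : ¬ IsReduced (B ++ B) := by
        intro hBB
        apply hc
        have : IsReduced ((A ++ A).map lm) := by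
          have := (gK _ hBB (by rw [← mul_mk]; exact K.mul_mem hBK hBK)).isReduced_map hR hBB
          simpa [hAB] using this
        exact isReduced_of_map this
      obtain ⟨a, A', rfl, hA'⟩ := not_cyc hA hc
      obtain ⟨b, B', rfl, hB'⟩ := not_cyc hB hc'
      simp only [List.map_cons, List.map_append, List.cons.injEq] at hAB
      obtain ⟨hab, hAB'⟩ := hAB
      have hAB'' : A'.map lm = B'.map lm := by
        simp only [List.map_nil, lm_linv, hab] at hAB'
        exact List.append_cancel_right hAB'
      have key : ∀ (a : Option Z × Bool) (A' : List (Option Z × Bool)),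
          mk (a :: (A' ++ [linv a])) = mk [a] * mk A' * (mk [a])⁻¹ := by
        intro a A'
        rw [mk_cons', ← mul_mk, mk_linv, mul_assoc]
      obtain ⟨g, hg, hg'⟩ := ih (pull a H) (pull b K) A' B' (gH.pull hA hAH) (gK.pull hB hBK)
        (nH.pull a) (by simp at hn; omega) (hA.factor ⟨[a], [linv a], by simp⟩)
        (hB.factor ⟨[b], [linv b], by simp⟩) hA' (by rwa [mem_pull, ← key])
        (by rwa [mem_pull, ← key]) hAB''
      have hm : merge (mk [a]) = merge (mk [b]) := by
        rw [merge_mk, merge_mk, List.map_singleton, List.map_singleton, hab]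
      refine ⟨mk [a] * g * (mk [b])⁻¹, by simp only [_root_.map_mul, _root_.map_inv, hg, hm]; group, ?_⟩
      intro h hh k hk hhk
      have := hg' ((mk [a])⁻¹ * h * mk [a]) (by rw [mem_pull]; convert hh using 1; group)
        ((mk [b])⁻¹ * k * mk [b]) (by rw [mem_pull]; convert hk using 1; group)
        (by simp only [_root_.map_mul, _root_.map_inv, hhk, hm])
      have e : h = mk [a] * ((mk [a])⁻¹ * h * mk [a]) * (mk [a])⁻¹ := by group
      rw [e, this]
      group

/-- For subgroups whose reduced words satisfy an admissibility condition strong enough to recover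
the merged letters, every conjugator between nontrivial images under `merge` lifts uniformly. -/
theorem merge_lift (hR : ∀ z e z' e', Adm (z, e) 0 (z', e') → e = e')
    (hD : ∀ z₁ e₁ k z₂ e₂ l z₃ e₃ z₁' z₂' z₃', Adm (z₁, e₁) k (z₂, e₂) →
      Adm (z₂, e₂) l (z₃, e₃) → Adm (z₁', e₁) k (z₂', e₂) → Adm (z₂', e₂) l (z₃', e₃) → z₂ = z₂')
    (n : ℕ) : ∀ (H K : Subgroup (FreeGroup (Option Z))) (w : List (Option Unit × Bool)),
    GoodSub Adm H → GoodSub Adm K → NoPow H → w.length ≤ n → IsReduced w →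
    (∃ h ∈ H, ∃ k ∈ K, h ≠ 1 ∧ merge h = mk w * merge k * (mk w)⁻¹) →
    ∃ g : FreeGroup (Option Z), merge g = mk w ∧ ∀ h ∈ H, ∀ k ∈ K,
      merge h = mk w * merge k * (mk w)⁻¹ → h = g * k * g⁻¹ := by
  have base : ∀ (H K : Subgroup (FreeGroup (Option Z))), GoodSub Adm H → GoodSub Adm K →
      NoPow H → (∃ h ∈ H, ∃ k ∈ K, h ≠ 1 ∧ merge h = merge k) →
      ∃ g : FreeGroup (Option Z), merge g = 1 ∧ ∀ h ∈ H, ∀ k ∈ K, merge h = merge k →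
        h = g * k * g⁻¹ := by
    rintro H K gH gK nH ⟨h, hh, k, hk, hne, hhk⟩
    obtain ⟨A, hA, rfl⟩ := exists_reduced h
    obtain ⟨B, hB, rfl⟩ := exists_reduced k
    refine merge_base hR hD _ H K A B gH gK nH le_rfl hA hB ?_ hh hk ?_
    · rintro rfl; exact hne rfl
    · rw [merge_mk, merge_mk] at hhk
      exact eq_of_mk_eq ((gH _ hA hh).isReduced_map hR hA) ((gK _ hB hk).isReduced_map hR hB) hhk
  induction n with
  | zero =>
    intro H K w gH gK nH hn _ hex
    obtain rfl := List.length_eq_zero_iff.1 (Nat.le_zero.1 hn)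
    have e : mk ([] : List (Option Unit × Bool)) = 1 := rfl
    simp only [e, one_mul, inv_one, mul_one] at hex ⊢
    exact base H K gH gK nH hex
  | succ n ih =>
    intro H K w gH gK nH hn hw hex
    rcases eq_or_ne w [] with rfl | hwne
    · exact ih H K [] gH gK nH (by simp) hw hex
    -- if the first letter of `w` starts a reduced word of `H`, move the base point of `H`
    by_cases c1 : ∃ s w' a v, w = s :: w' ∧ IsReduced (a :: v) ∧ mk (a :: v) ∈ H ∧ lm a = s
    · obtain ⟨_, w', a, v, rfl, hv, hvH, rfl⟩ := c1
      have hma : merge (mk [a]) = mk [lm a] := merge_mk _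
      obtain ⟨h, hh, k, hk, hne, hhk⟩ := hex
      rw [mk_cons'] at hhk ⊢
      obtain ⟨g, hg, hg'⟩ := ih (pull a H) K w' (gH.pull hv hvH) gK (nH.pull a)
        (by simpa using hn) (hw.factor ⟨[lm a], [], by simp⟩)
        ⟨(mk [a])⁻¹ * h * mk [a], by rw [mem_pull]; convert hh using 1; group, k, hk, by
          intro h1
          apply hne
          have e : h = mk [a] * ((mk [a])⁻¹ * h * mk [a]) * (mk [a])⁻¹ := by group
          rw [e, h1]; group, by rw [_root_.map_mul, _root_.map_mul, hhk, _root_.map_inv, hma]; group⟩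
      refine ⟨mk [a] * g, by rw [_root_.map_mul, hma, hg], ?_⟩
      intro h hh k hk hhk
      have := hg' ((mk [a])⁻¹ * h * mk [a]) (by rw [mem_pull]; convert hh using 1; group) k hk
        (by rw [_root_.map_mul, _root_.map_mul, hhk, _root_.map_inv, hma]; group)
      have e : h = mk [a] * ((mk [a])⁻¹ * h * mk [a]) * (mk [a])⁻¹ := by group
      rw [e, this]; group
    -- if the inverse of the last letter of `w` starts a reduced word of `K`, move that of `K`
    by_cases c2 : ∃ t w' a v, w = w' ++ [t] ∧ IsReduced (a :: v) ∧ mk (a :: v) ∈ K ∧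
        lm a = linv t
    · obtain ⟨t, w', a, v, rfl, hv, hvH, hat⟩ := c2
      have ht : mk [t] = (mk [lm a])⁻¹ := by rw [hat, mk_linv, inv_inv]
      have hma : merge (mk [a]) = mk [lm a] := merge_mk _
      obtain ⟨h, hh, k, hk, hne, hhk⟩ := hex
      rw [← mul_mk, ht] at hhk ⊢
      obtain ⟨g, hg, hg'⟩ := ih H (pull a K) w' gH (gK.pull hv hvH) nH
        (by simpa using hn) (hw.factor ⟨[], [t], by simp⟩)
        ⟨h, hh, (mk [a])⁻¹ * k * mk [a], by rw [mem_pull]; convert hk using 1; group, hne, by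
          rw [hhk, _root_.map_mul, _root_.map_mul, _root_.map_inv, hma]; group⟩
      refine ⟨g * (mk [a])⁻¹, by rw [_root_.map_mul, _root_.map_inv, hma, hg], ?_⟩
      intro h hh k hk hhk
      rw [hg' h hh ((mk [a])⁻¹ * k * mk [a]) (by rw [mem_pull]; convert hk using 1; group)
        (by rw [hhk, _root_.map_mul, _root_.map_mul, _root_.map_inv, hma]; group)]
      group
    -- otherwise nothing cancels on either side of `h w = w k`, and comparing first letters
    -- contradicts `c1`
    exfalso
    obtain ⟨h, hh, k, hk, hne, hhk⟩ := hex
    obtain ⟨A, hA, rfl⟩ := exists_reduced h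
    obtain ⟨B, hB, rfl⟩ := exists_reduced k
    have rA := (gH _ hA hh).isReduced_map hR hA
    have rB := (gK _ hB hk).isReduced_map hR hB
    have hAne : A ≠ [] := by rintro rfl; exact hne rfl
    obtain ⟨s, w', rfl⟩ := List.exists_cons_of_ne_nil hwne
    have r1 : IsReduced (A.map lm ++ s :: w') := by
      refine isReduced_append.2 ⟨rA, hw, ?_⟩
      intro b hb c hc
      by_contra hbc
      have hbc := cancel_of_not hbc
      obtain ⟨A', a, rfl⟩ := (List.eq_nil_or_concat' A).resolve_left hAne
      obtain rfl : lm a = b := by simpa using hb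
      obtain rfl : s = c := by simpa using hc
      refine c1 ⟨s, w', linv a, invRev A', rfl, ?_, ?_, ?_⟩
      · rw [← invRev_concat']; exact isReduced_invRev hA
      · rw [← invRev_concat', ← inv_mk]; exact H.inv_mem hh
      · rw [hbc, lm_linv]
    have r2 : IsReduced (s :: w' ++ B.map lm) := by
      refine isReduced_append.2 ⟨hw, rB, ?_⟩
      intro b hb c hc
      by_contra hbc
      have hbc := cancel_of_not hbc
      cases B with
      | nil => simp at hc
      | cons a B =>
        obtain rfl : lm a = c := by simpa using hc
        obtain ⟨w0, t, h0⟩ := (List.eq_nil_or_concat' (s :: w')).resolve_left hwne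
        obtain rfl : t = b := by rw [h0] at hb; simpa using hb
        exact c2 ⟨t, w0, a, B, h0, hB, hk, hbc⟩
    have heq : A.map lm ++ s :: w' = s :: w' ++ B.map lm := by
      apply eq_of_mk_eq r1 r2
      rw [← mul_mk, ← mul_mk, ← merge_mk, ← merge_mk, hhk]
      group
    obtain ⟨a, A, rfl⟩ := List.exists_cons_of_ne_nil hAne
    refine c1 ⟨s, w', a, A, rfl, hA, hh, ?_⟩
    simp only [List.map_cons, List.cons_append, List.cons.injEq] at heq
    exact heq.1

end MergeTheorem
end FreeGroup.GenJoin

/-! ### Runs of one letter in reduced words -/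

namespace FreeGroup.GenJoin

section Encode
variable {ι : Type*}

lemma expsum_append {α : Type*} (u v : List (α × Bool)) : expsum (u ++ v) = expsum u + expsum v := by
  simp [expsum]

lemma expsum_cons {α : Type*} (a : α × Bool) (v : List (α × Bool)) :
    expsum (a :: v) = (if a.2 then 1 else -1) + expsum v := by
  simp [expsum]

lemma mk_none (e : Bool) : mk [((none : Option ι), e)] = of none ^ (if e then 1 else -1 : ℤ) := by
  cases e <;> simp [of, invRev]

lemma mk_of_none {ys : List (Option ι × Bool)} (h : ∀ a ∈ ys, a.1 = none) :
    mk ys = of none ^ expsum ys := by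
  induction ys with
  | nil => rfl
  | cons a ys ih =>
    obtain ⟨a, e⟩ := a
    obtain rfl : a = none := h (a, e) (by simp)
    rw [mk_cons', ih fun a ha => h a (List.mem_cons_of_mem _ ha), mk_none, ← zpow_add, expsum_cons]

/-- The reduced word of the power `none ^ m`. -/
def yrep (m : ℤ) : List (Option ι × Bool) := List.replicate m.natAbs (none, decide (0 ≤ m))

lemma yrep_none (m : ℤ) : ∀ a ∈ (yrep m : List (Option ι × Bool)), a.1 = none := by
  intro a ha
  rw [yrep, List.mem_replicate] at ha
  rw [ha.2]

lemma expsum_yrep (m : ℤ) : expsum (yrep m : List (Option ι × Bool)) = m := by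
  simp only [expsum, yrep, List.map_replicate, List.sum_replicate, nsmul_eq_mul]
  by_cases h : 0 ≤ m
  · simp [h]
  · simp [h, abs_of_neg (not_le.1 h)]

lemma mk_yrep (m : ℤ) : mk (yrep m : List (Option ι × Bool)) = of none ^ m := by
  rw [mk_of_none (yrep_none m), expsum_yrep]

lemma isReduced_yrep (m : ℤ) : IsReduced (yrep m : List (Option ι × Bool)) := by
  unfold IsReduced yrep
  exact List.isChain_replicate_of_rel _ (by simp)

/-- The runs of `none` in `w` have exponent at most `D`. -/
def Bd (D : ℕ) (w : List (Option ι × Bool)) : Prop :=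
  ∀ ys, ys <:+: w → (∀ a ∈ ys, a.1 = none) → |expsum ys| ≤ D

lemma Bd.factor {D : ℕ} {u w : List (Option ι × Bool)} (h : Bd D w) (hu : u <:+: w) : Bd D u :=
  fun ys hys => h ys (hys.trans hu)

lemma first_unique {ys ys' : List (Option ι × Bool)} {z z' e e' q q'}
    (h : ys ++ (some z, e) :: q = ys' ++ (some z', e') :: q') (hys : ∀ a ∈ ys, a.1 = none)
    (hys' : ∀ a ∈ ys', a.1 = none) : ys = ys' ∧ z = z' ∧ e = e' ∧ q = q' := by
  induction ys generalizing ys' with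
  | nil =>
    cases ys' with
    | nil => simpa [and_assoc] using h
    | cons a ys' =>
      have h1 := hys' a (by simp)
      simp only [List.nil_append, List.cons_append, List.cons.injEq] at h
      rw [← h.1] at h1
      simp at h1
  | cons a ys ih =>
    cases ys' with
    | nil =>
      have h1 := hys a (by simp)
      simp only [List.nil_append, List.cons_append, List.cons.injEq] at h
      rw [h.1] at h1
      simp at h1
    | cons b ys' =>
      simp only [List.cons_append, List.cons.injEq] at h
      obtain ⟨rfl, h⟩ := h
      obtain ⟨rfl, h2⟩ := ih h (fun a ha => hys a (List.mem_cons_of_mem _ ha))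
        (fun a ha => hys' a (List.mem_cons_of_mem _ ha))
      exact ⟨rfl, h2⟩

variable {Adm : ι × Bool → ℤ → ι × Bool → Prop}

lemma good_of_none {ys : List (Option ι × Bool)} (hys : ∀ a ∈ ys, a.1 = none) : Good Adm ys := by
  rintro p z e ys z' e' q rfl _
  have := hys (some z, e) (by simp)
  simp at this

lemma Good.none_append {W ys : List (Option ι × Bool)} (hW : Good Adm W)
    (hys : ∀ a ∈ ys, a.1 = none) : Good Adm (ys ++ W) := by
  induction ys with
  | nil => exact hW
  | cons a ys ih =>
    have ha := hys a (by simp)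
    have := ih fun a ha => hys a (List.mem_cons_of_mem _ ha)
    rintro p z e zs z' e' q h hzs
    cases p with
    | nil =>
      simp only [List.nil_append, List.cons_append, List.cons.injEq] at h
      rw [h.1] at ha
      simp at ha
    | cons b p =>
      simp only [List.cons_append, List.cons.injEq] at h
      exact this p z e zs z' e' q h.2 hzs

lemma good_singleton_append {z : ι} {e : Bool} {ys : List (Option ι × Bool)}
    (hys : ∀ a ∈ ys, a.1 = none) : Good Adm ((some z, e) :: ys) := by
  rintro p z1 e1 zs z2 e2 q h hzs
  cases p with
  | nil =>
    simp only [List.nil_append, List.cons.injEq] at h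
    have := hys (some z2, e2) (by rw [h.2]; simp)
    simp at this
  | cons b p =>
    simp only [List.cons_append, List.cons.injEq] at h
    have := hys (some z2, e2) (by rw [h.2]; simp)
    simp at this

lemma good_cons {z z' : ι} {e e' : Bool} {m : ℤ} {W : List (Option ι × Bool)}
    (hA : Adm (z, e) m (z', e')) (hW : Good Adm ((some z', e') :: W)) :
    Good Adm ((some z, e) :: (yrep m ++ (some z', e') :: W)) := by
  rintro p z1 e1 zs z2 e2 q h hzs
  cases p with
  | nil =>
    simp only [List.nil_append, List.cons.injEq, Prod.mk.injEq, Option.some.injEq] at h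
    obtain ⟨⟨rfl, rfl⟩, h⟩ := h
    obtain ⟨rfl, rfl, rfl, rfl⟩ := first_unique h (yrep_none m) hzs
    rwa [expsum_yrep]
  | cons b p =>
    simp only [List.cons_append, List.cons.injEq] at h
    exact hW.none_append (yrep_none m) p z1 e1 zs z2 e2 q h.2 hzs

lemma isReduced_yrep_append {z' : ι} {e' : Bool} {m : ℤ} {W : List (Option ι × Bool)}
    (hW : IsReduced ((some z', e') :: W)) : IsReduced (yrep m ++ (some z', e') :: W) := by
  refine isReduced_append.2 ⟨isReduced_yrep m, hW, ?_⟩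
  intro a ha b hb hab
  have h1 := yrep_none m a (List.mem_of_getLast? ha)
  obtain rfl : (some z', e') = b := by simpa using hb
  rw [h1] at hab
  simp at hab

lemma isReduced_cons_yrep {z : ι} {e : Bool} (m : ℤ) :
    IsReduced ((some z, e) :: yrep m) := by
  refine isReduced_append (u := [(some z, e)]).2 ⟨IsReduced.singleton, isReduced_yrep m, ?_⟩
  intro a ha b hb hab
  have h1 := yrep_none m b (List.mem_of_mem_head? hb)
  obtain rfl : (some z, e) = a := by simpa using ha
  rw [h1] at hab
  simp at hab

lemma isReduced_cons {z z' : ι} {e e' : Bool} {m : ℤ} {W : List (Option ι × Bool)}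
    (h0 : m = 0 → e = e') (hW : IsReduced ((some z', e') :: W)) :
    IsReduced ((some z, e) :: (yrep m ++ (some z', e') :: W)) := by
  rcases eq_or_ne m 0 with rfl | hm
  · exact isReduced_cons_cons.2 ⟨fun _ => h0 rfl, hW⟩
  · refine IsReduced.append_overlap (L₁ := [(some z, e)]) (L₂ := yrep m)
      (isReduced_cons_yrep m) (isReduced_yrep_append hW) ?_
    intro h
    rw [yrep, List.replicate_eq_nil_iff] at h
    omega

end Encode
end FreeGroup.GenJoin

/-! ### A sparse embedding and its code letters -/

namespace FreeGroup.GenJoin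

section Code
variable {ι : Type*} [DecidableEq ι] (i₀ : ι) (N : ι → ℕ) (D : ℕ)

/-- The sign of a letter, as an integer. -/
def sg (e : Bool) : ℤ := if e then 1 else -1

/-- The first letter of the code word of the letter `(i, e)`, powers of `none` disregarded. -/
def first (i : ι) (e : Bool) : (ι × Bool) × Bool :=
  if e then ((i, false), true) else if i = i₀ then ((i, false), false) else ((i, true), false)

/-- The last letter of the code word of the letter `(i, e)`, powers of `none` disregarded. -/
def last (i : ι) (e : Bool) : (ι × Bool) × Bool :=
  if e then (if i = i₀ then ((i, false), true) else ((i, true), true)) else ((i, false), false)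

/-- The code: `i₀` is sent to the letter `c = (i₀, false)`, and any other `i` to
`y ^ M * c * y ^ (-M) * d * y ^ M`, where `c = (i, false)`, `d = (i, true)`, `y = none` and
`M = (D + 1) * N i`. -/
def emb : FreeGroup (Option ι) →* FreeGroup (Option (ι × Bool)) :=
  FreeGroup.lift fun a => match a with
    | none => of none
    | some i => if i = i₀ then of (some (i, false)) else
        of none ^ ((D + 1) * N i : ℤ) * of (some (i, false)) * of none ^ (-((D + 1) * N i) : ℤ) *
          of (some (i, true)) * of none ^ ((D + 1) * N i : ℤ)

/-- A left inverse of `emb`. The projection `emb ∘ retr` is invisible to `merge`. -/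
def retr : FreeGroup (Option (ι × Bool)) →* FreeGroup (Option ι) :=
  FreeGroup.lift fun a => match a with
    | none => of none
    | some (_, false) => of (some i₀)
    | some (i, true) => if i = i₀ then of (some i₀) else
        of none ^ ((D + 1) * N i : ℤ) * (of (some i₀))⁻¹ * of none ^ (-((D + 1) * N i) : ℤ) *
          of (some i) * of none ^ (-((D + 1) * N i) : ℤ)

/-- Exponents of `none` that can occur between two consecutive other letters in a coded word:
between two code words, or in the middle of one. -/
inductive CAdm : (ι × Bool) × Bool → ℤ → (ι × Bool) × Bool → Prop
  | join (i : ι) (e : Bool) (j : ι) (e' : Bool) (k : ℤ) (hk : |k| ≤ D)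
      (h0 : k = 0 → i = j → e = e') :
      CAdm (last i₀ i e) (sg e * ((D + 1) * N i) + k + sg e' * ((D + 1) * N j)) (first i₀ j e')
  | mid_pos (i : ι) (hi : i ≠ i₀) : CAdm ((i, false), true) (-((D + 1) * N i)) ((i, true), true)
  | mid_neg (i : ι) (hi : i ≠ i₀) : CAdm ((i, true), false) ((D + 1) * N i) ((i, false), false)

variable {i₀ N D}

lemma retr_emb (x : FreeGroup (Option ι)) : retr i₀ N D (emb i₀ N D x) = x := by
  have : (retr i₀ N D).comp (emb i₀ N D) = MonoidHom.id _ := by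
    ext a
    match a with
    | none => simp [retr, emb]
    | some i =>
      by_cases hi : i = i₀
      · simp [retr, emb, hi]
      · simp only [retr, emb, hi, MonoidHom.comp_apply, lift_apply_of, if_false, _root_.map_mul,
          map_zpow, MonoidHom.id_apply]
        group
  exact DFunLike.congr_fun this x

lemma merge_emb_retr (x : FreeGroup (Option (ι × Bool))) :
    merge (emb i₀ N D (retr i₀ N D x)) = merge x := by
  have : (merge.comp (emb i₀ N D)).comp (retr i₀ N D) = merge := by
    ext a
    match a with
    | none => simp [retr, emb, merge]
    | some (i, false) => simp [retr, emb, merge]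
    | some (i, true) =>
      by_cases hi : i = i₀
      · simp [retr, emb, hi, merge]
      · simp only [retr, emb, hi, MonoidHom.comp_apply, lift_apply_of, if_false, if_true,
          _root_.map_mul, map_zpow, _root_.map_inv, merge, FreeGroup.map.of, Option.map_none, Option.map_some]
        group
  exact DFunLike.congr_fun this x

lemma last_snd (i : ι) (e : Bool) : (last i₀ i e).2 = e := by
  unfold last; split_ifs <;> simp_all

lemma first_snd (i : ι) (e : Bool) : (first i₀ i e).2 = e := by
  unfold first; split_ifs <;> simp_all

/-- Adjacent letters of a coded word have the same sign, so that they do not cancel after merging. -/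
lemma CAdm.zero (hN : Function.Injective N) {z e z' e'} (h : CAdm i₀ N D (z, e) 0 (z', e')) :
    e = e' := by
  generalize hz : (z, e) = ζ at h
  generalize hz' : (z', e') = ζ' at h
  generalize hm : (0 : ℤ) = m at h
  cases h with
  | join i e1 j e2 k hk h0 =>
    have h1 := last_snd (i₀ := i₀) i e1
    have h2 := first_snd (i₀ := i₀) j e2
    rw [← hz] at h1
    rw [← hz'] at h2
    simp only at h1 h2
    subst h1 h2
    by_contra hne
    have key : |((D : ℤ) + 1) * (N i - N j)| ≤ D := by
      cases e <;> cases e' <;> simp [sg] at hm hne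
      · have : ((D : ℤ) + 1) * (N i - N j) = k := by linarith
        rwa [this]
      · have : ((D : ℤ) + 1) * (N i - N j) = -k := by linarith
        rwa [this, abs_neg]
    have h3 : ((N i : ℤ) - N j) = 0 := by
      by_contra h4
      have := Int.one_le_abs h4
      rw [abs_mul, abs_of_nonneg (by positivity)] at key
      nlinarith
    have hij : i = j := hN (by omega)
    subst hij
    refine hne (h0 ?_ rfl)
    cases e <;> cases e' <;> simp [sg] at hm hne <;> linarith
  | mid_pos i hi => simp_all
  | mid_neg i hi => simp_all

lemma CAdm.arrive_pos {z₁ e₁ k z} (h : CAdm i₀ N D (z₁, e₁) k (z, true)) :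
    (z.2 = false ∧ (e₁ = true → -D ≤ k)) ∨
      (z.2 = true ∧ z.1 ≠ i₀ ∧ e₁ = true ∧ k = -((D + 1) * N z.1)) := by
  generalize hz : (z₁, e₁) = ζ at h
  generalize hz' : (z, true) = ζ' at h
  cases h with
  | join i e1 j e2 k hk h0 =>
    have h1 := last_snd (i₀ := i₀) i e1
    have h2 := first_snd (i₀ := i₀) j e2
    rw [← hz] at h1
    rw [← hz'] at h2
    simp only at h1 h2
    subst h1 h2
    left
    refine ⟨by simpa [first] using congrArg (fun x => x.1.2) hz', ?_⟩
    rintro rfl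
    have := abs_le.1 hk
    simp only [sg, if_true]
    nlinarith [this.1, mul_nonneg (by positivity : (0 : ℤ) ≤ D + 1) (by positivity : (0 : ℤ) ≤ N i), mul_nonneg (by positivity : (0 : ℤ) ≤ D + 1) (by positivity : (0 : ℤ) ≤ N j)]
  | mid_pos i hi => right; simp_all
  | mid_neg i hi => simp_all

lemma CAdm.arrive_neg {z₁ e₁ k z} (h : CAdm i₀ N D (z₁, e₁) k (z, false)) :
    (z = (i₀, false) ∧ (e₁ = false → N i₀ = 0 → k ≤ D)) ∨ (z.1 ≠ i₀ ∧ z.2 = true) ∨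
      (z.1 ≠ i₀ ∧ z.2 = false ∧ e₁ = false ∧ k = (D + 1) * N z.1) := by
  generalize hz : (z₁, e₁) = ζ at h
  generalize hz' : (z, false) = ζ' at h
  cases h with
  | join i e1 j e2 k hk h0 =>
    have h1 := last_snd (i₀ := i₀) i e1
    have h2 := first_snd (i₀ := i₀) j e2
    rw [← hz] at h1
    rw [← hz'] at h2
    simp only at h1 h2
    subst h1 h2
    by_cases hj : j = i₀
    · left
      subst hj
      refine ⟨by simpa [first] using congrArg Prod.fst hz', ?_⟩
      rintro rfl -
      have := abs_le.1 hk
      simp only [sg, Bool.false_eq_true, if_false]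
      nlinarith [this.1, mul_nonneg (by positivity : (0 : ℤ) ≤ D + 1) (by positivity : (0 : ℤ) ≤ N i), mul_nonneg (by positivity : (0 : ℤ) ≤ D + 1) (by positivity : (0 : ℤ) ≤ N j)]
    · right; left
      have : z = (j, true) := by simpa [first, hj] using congrArg Prod.fst hz'
      simp [this, hj]
  | mid_pos i hi => simp_all
  | mid_neg i hi => right; right; simp_all

lemma CAdm.depart_pos {z₁ e₁ k z} (h : CAdm i₀ N D (z, true) k (z₁, e₁)) :
    (z = (i₀, false) ∧ (e₁ = true → N i₀ = 0 → -D ≤ k)) ∨ (z.1 ≠ i₀ ∧ z.2 = true) ∨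
      (z.1 ≠ i₀ ∧ z.2 = false ∧ e₁ = true ∧ k = -((D + 1) * N z.1)) := by
  generalize hz : (z, true) = ζ at h
  generalize hz' : (z₁, e₁) = ζ' at h
  cases h with
  | join i e1 j e2 k hk h0 =>
    have h1 := last_snd (i₀ := i₀) i e1
    have h2 := first_snd (i₀ := i₀) j e2
    rw [← hz] at h1
    rw [← hz'] at h2
    simp only at h1 h2
    subst h1 h2
    by_cases hj : i = i₀
    · left
      subst hj
      refine ⟨by simpa [last] using congrArg Prod.fst hz, ?_⟩
      rintro rfl -
      have := abs_le.1 hk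
      simp only [sg, if_true]
      nlinarith [this.1, mul_nonneg (by positivity : (0 : ℤ) ≤ D + 1) (by positivity : (0 : ℤ) ≤ N i), mul_nonneg (by positivity : (0 : ℤ) ≤ D + 1) (by positivity : (0 : ℤ) ≤ N j)]
    · right; left
      have : z = (i, true) := by simpa [last, hj] using congrArg Prod.fst hz
      simp [this, hj]
  | mid_pos i hi => right; right; simp_all
  | mid_neg i hi => simp_all

lemma CAdm.depart_neg {z₁ e₁ k z} (h : CAdm i₀ N D (z, false) k (z₁, e₁)) :
    (z.2 = false ∧ (e₁ = false → k ≤ D)) ∨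
      (z.2 = true ∧ z.1 ≠ i₀ ∧ e₁ = false ∧ k = (D + 1) * N z.1) := by
  generalize hz : (z, false) = ζ at h
  generalize hz' : (z₁, e₁) = ζ' at h
  cases h with
  | join i e1 j e2 k hk h0 =>
    have h1 := last_snd (i₀ := i₀) i e1
    have h2 := first_snd (i₀ := i₀) j e2
    rw [← hz] at h1
    rw [← hz'] at h2
    simp only at h1 h2
    subst h1 h2
    left
    refine ⟨by simpa [last] using congrArg (fun x => x.1.2) hz, ?_⟩
    rintro rfl
    have := abs_le.1 hk
    simp only [sg, Bool.false_eq_true, if_false]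
    nlinarith [this.1, mul_nonneg (by positivity : (0 : ℤ) ≤ D + 1) (by positivity : (0 : ℤ) ≤ N i), mul_nonneg (by positivity : (0 : ℤ) ≤ D + 1) (by positivity : (0 : ℤ) ≤ N j)]
  | mid_pos i hi => simp_all
  | mid_neg i hi => right; simp_all

/-- A letter of a coded word is determined by the exponents of `none` on both sides of it and by the
signs of the letter and of its neighbours. -/
lemma CAdm.det (hN : Function.Injective N) (hN0 : N i₀ = 0) {z₁ e₁ k z₂ e₂ l z₃ e₃ z₁' z₂' z₃'}
    (h1 : CAdm i₀ N D (z₁, e₁) k (z₂, e₂)) (h2 : CAdm i₀ N D (z₂, e₂) l (z₃, e₃))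
    (h1' : CAdm i₀ N D (z₁', e₁) k (z₂', e₂)) (h2' : CAdm i₀ N D (z₂', e₂) l (z₃', e₃)) :
    z₂ = z₂' := by
  obtain ⟨i, t⟩ := z₂
  obtain ⟨i', t'⟩ := z₂'
  have big : ∀ j, j ≠ i₀ → (D : ℤ) < (D + 1) * N j := by
    intro j hj
    have : N j ≠ 0 := fun h => hj (hN (h.trans hN0.symm))
    have : (1 : ℤ) ≤ N j := by omega
    nlinarith
  have inj : (((D : ℤ) + 1) * N i = (D + 1) * N i') → i = i' := by
    intro h
    apply hN
    have := mul_left_cancel₀ (by positivity) h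
    exact_mod_cast this
  cases e₂
  · have b1 := h2.depart_neg
    have b1' := h2'.depart_neg
    have b2 := h1.arrive_neg
    have b2' := h1'.arrive_neg
    have bi := big i
    have bi' := big i'
    generalize ((D : ℤ) + 1) * N i = X at *
    generalize ((D : ℤ) + 1) * N i' = X' at *
    grind
  · have b1 := h2.depart_pos
    have b1' := h2'.depart_pos
    have b2 := h1.arrive_pos
    have b2' := h1'.arrive_pos
    have bi := big i
    have bi' := big i'
    generalize ((D : ℤ) + 1) * N i = X at *
    generalize ((D : ℤ) + 1) * N i' = X' at *
    grind

end Code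
end FreeGroup.GenJoin

/-! ### Conjugators lift to the rank two quotient -/

namespace FreeGroup.GenJoin

section Specialize
variable {ι : Type*} [DecidableEq ι] {i₀ : ι} {N : ι → ℕ} {D : ℕ}

lemma mk_some_true {α : Type*} (z : α) : mk [(some z, true)] = of (some z) := rfl

lemma mk_some_false {α : Type*} (z : α) : mk [(some z, false)] = (of (some z))⁻¹ := by
  simp [of, invRev]

/-- Prepending one code word: the last letter of the code word is replaced by the first one. -/
lemma code_step (hN0 : N i₀ = 0) (i : ι) (e : Bool)
    {V : List (Option (ι × Bool) × Bool)}
    (hV : IsReduced ((some (last i₀ i e).1, (last i₀ i e).2) :: V))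
    (gV : Good (CAdm i₀ N D) ((some (last i₀ i e).1, (last i₀ i e).2) :: V)) :
    ∃ W, IsReduced ((some (first i₀ i e).1, (first i₀ i e).2) :: W) ∧
      Good (CAdm i₀ N D) ((some (first i₀ i e).1, (first i₀ i e).2) :: W) ∧
      ∀ x, mk V = of none ^ (sg e * ((D + 1) * N i)) * x →
        emb i₀ N D (mk [(some i, e)]) * x = of none ^ (sg e * ((D + 1) * N i)) *
          mk ((some (first i₀ i e).1, (first i₀ i e).2) :: W) := by
  by_cases hi : i = i₀
  · subst hi
    refine ⟨V, ?_, ?_, ?_⟩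
    · cases e <;> simpa [last, first] using hV
    · cases e <;> simpa [last, first] using gV
    · intro x hx
      simp only [hN0, Nat.cast_zero, mul_zero, zpow_zero, one_mul] at hx ⊢
      rw [mk_cons' _ V, hx]
      cases e
      · simp only [mk_some_false, first, _root_.map_inv]
        simp [emb, mk_some_false]
      · simp only [mk_some_true, first]
        simp [emb, mk_some_true]
  · cases e
    · refine ⟨yrep ((D + 1) * N i) ++ (some (last i₀ i false).1, (last i₀ i false).2) :: V,
        ?_, ?_, ?_⟩
      · refine isReduced_cons ?_ hV
        intro _; rw [first_snd, last_snd]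
      · refine good_cons ?_ gV
        simpa [first, last, hi] using CAdm.mid_neg (N := N) (D := D) i hi
      · intro x hx
        rw [mk_cons' _ (yrep _ ++ _), ← mul_mk, mk_cons' _ V, hx, mk_yrep, mk_some_false]
        simp only [first, last, hi, Bool.false_eq_true, if_false, mk_some_false, sg, _root_.map_inv,
          emb, lift_apply_of]
        group
    · refine ⟨yrep (-((D + 1) * N i)) ++ (some (last i₀ i true).1, (last i₀ i true).2) :: V,
        ?_, ?_, ?_⟩
      · refine isReduced_cons ?_ hV
        intro _; rw [first_snd, last_snd]
      · refine good_cons ?_ gV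
        simpa [first, last, hi] using CAdm.mid_pos (N := N) (D := D) i hi
      · intro x hx
        rw [mk_cons' _ (yrep _ ++ _), ← mul_mk, mk_cons' _ V, hx, mk_yrep, mk_some_true]
        simp only [first, last, hi, if_true, if_false, mk_some_true, sg,
          emb, lift_apply_of]
        group

lemma emb_of_none (n : ℤ) : emb i₀ N D (of none ^ n) = of none ^ n := by
  simp [emb]

lemma emb_mk_none {ys : List (Option ι × Bool)} (h : ∀ a ∈ ys, a.1 = none) :
    emb i₀ N D (mk ys) = of none ^ expsum ys := by
  rw [mk_of_none h, emb_of_none]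

/-- The reduced word of the code of a reduced word with bounded runs of `none` is good. -/
lemma code_good (hN : Function.Injective N) (hN0 : N i₀ = 0) (n : ℕ) :
    ∀ (i : ι) (e : Bool) (w : List (Option ι × Bool)), w.length ≤ n →
    IsReduced ((some i, e) :: w) → Bd D ((some i, e) :: w) →
    ∃ W, IsReduced ((some (first i₀ i e).1, (first i₀ i e).2) :: W) ∧
      Good (CAdm i₀ N D) ((some (first i₀ i e).1, (first i₀ i e).2) :: W) ∧
      emb i₀ N D (mk ((some i, e) :: w)) = of none ^ (sg e * ((D + 1) * N i)) *
          mk ((some (first i₀ i e).1, (first i₀ i e).2) :: W) := by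
  induction n using Nat.strong_induction_on with
  | _ n ih =>
  intro i e w hn hw hb
  by_cases hall : ∀ a ∈ w, a.1 = none
  · obtain ⟨W, h1, h2, h3⟩ := code_step (D := D) hN0 i e
      (V := yrep (sg e * ((D + 1) * N i) + expsum w)) (isReduced_cons_yrep _)
      (good_singleton_append (yrep_none _))
    refine ⟨W, h1, h2, ?_⟩
    rw [mk_cons', _root_.map_mul, emb_mk_none hall]
    apply h3
    rw [mk_yrep, zpow_add]
  · push Not at hall
    obtain ⟨ys, j, e', q, rfl, hys⟩ := exists_first_some hall
    obtain ⟨W', h1, h2, h3⟩ := ih q.length (by simp at hn; omega) j e' q le_rfl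
      (hw.factor ⟨(some i, e) :: ys, [], by simp⟩) (hb.factor ⟨(some i, e) :: ys, [], by simp⟩)
    have hj := CAdm.join (i₀ := i₀) (N := N) (D := D) i e j e' (expsum ys)
      (hb ys ⟨[(some i, e)], (some j, e') :: q, by simp⟩ hys) (by
        intro h0 hij
        have : ys = [] := by
          apply eq_nil_of_mk_eq_one (hw.factor ⟨[(some i, e)], (some j, e') :: q, by simp⟩)
          rw [mk_of_none hys, h0, zpow_zero]
        subst this hij
        exact (isReduced_cons_cons.1 hw).1 rfl)
    obtain ⟨W, k1, k2, k3⟩ := code_step (D := D) hN0 i e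
      (V := yrep (sg e * ((D + 1) * N i) + expsum ys + sg e' * ((D + 1) * N j)) ++
        (some (first i₀ j e').1, (first i₀ j e').2) :: W')
      (isReduced_cons (by
        intro h0
        rw [h0] at hj
        exact hj.zero hN) h1) (good_cons hj h2)
    refine ⟨W, k1, k2, ?_⟩
    rw [mk_cons', _root_.map_mul]
    apply k3
    rw [← mul_mk, ← mul_mk, _root_.map_mul, emb_mk_none hys, h3, mk_yrep, zpow_add, zpow_add]
    group

lemma goodSub_emb (hN : Function.Injective N) (hN0 : N i₀ = 0)
    {H : Subgroup (FreeGroup (Option ι))} (hH : ∀ w, IsReduced w → mk w ∈ H → Bd D w) :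
    GoodSub (CAdm i₀ N D) (H.map (emb i₀ N D)) := by
  rintro u hu ⟨x, hx, hxu⟩
  obtain ⟨w, hw, rfl⟩ := exists_reduced x
  have hb := hH w hw hx
  by_cases hall : ∀ a ∈ w, a.1 = none
  · rw [emb_mk_none hall, ← mk_yrep] at hxu
    rw [← eq_of_mk_eq (isReduced_yrep _) hu hxu]
    exact good_of_none (yrep_none _)
  · push Not at hall
    obtain ⟨ys, j, e', q, rfl, hys⟩ := exists_first_some hall
    obtain ⟨W, h1, h2, h3⟩ := code_good hN hN0 q.length j e' q le_rfl
      (hw.factor ⟨ys, [], by simp⟩) (hb.factor ⟨ys, [], by simp⟩)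
    rw [← mul_mk, _root_.map_mul, emb_mk_none hys, h3, ← mul_assoc, ← zpow_add, ← mk_yrep,
      mul_mk] at hxu
    rw [← eq_of_mk_eq (isReduced_yrep_append h1) hu hxu]
    exact h2.none_append (yrep_none _)

lemma noPow_emb {H : Subgroup (FreeGroup (Option ι))} (hH : NoPow H) :
    NoPow (H.map (emb i₀ N D)) := by
  rintro x n hn ⟨h, hh, hx⟩
  refine hH (retr i₀ N D x) n hn ?_
  have := congrArg (retr i₀ N D) hx
  rw [retr_emb, _root_.map_mul, _root_.map_mul, _root_.map_inv, _root_.map_zpow] at this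
  have e : retr i₀ N D (of none) = of none := by simp [retr]
  rw [e] at this
  rwa [← this]

/-- `ρ` is surjective, injective on `H` and on `K`, and every `g` that conjugates the image of some
element of `K` to the image of a nontrivial element of `H` lifts to a single `x` which conjugates
`k` to `h` for all `k ∈ K` and `h ∈ H` whose images are conjugated by `g`. -/
def Lifts {G G' : Type*} [Group G] [Group G'] (ρ : G →* G') (H K : Subgroup G) : Prop :=
  Function.Surjective ρ ∧ (∀ h ∈ H, ρ h = 1 → h = 1) ∧ (∀ k ∈ K, ρ k = 1 → k = 1) ∧
    ∀ g : G', (∃ h ∈ H, ∃ k ∈ K, h ≠ 1 ∧ ρ h = g * ρ k * g⁻¹) →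
      ∃ x : G, ρ x = g ∧ ∀ h ∈ H, ∀ k ∈ K, ρ h = g * ρ k * g⁻¹ → h = x * k * x⁻¹

/-- Coding followed by merging has the lifting property, if the runs of `none` in the reduced words
of `H` and of `K` are bounded. -/
theorem exists_lifts (i₀ : ι) (hN : Function.Injective N) (hN0 : N i₀ = 0)
    {H K : Subgroup (FreeGroup (Option ι))} (hH : ∀ w, IsReduced w → mk w ∈ H → Bd D w)
    (hK : ∀ w, IsReduced w → mk w ∈ K → Bd D w) (nH : NoPow H) :
    Lifts (merge.comp (emb i₀ N D)) H K := by
  have inj : ∀ {H : Subgroup (FreeGroup (Option ι))}, (∀ w, IsReduced w → mk w ∈ H → Bd D w) →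
      ∀ h ∈ H, merge.comp (emb i₀ N D) h = 1 → h = 1 := by
    intro H hH h hh h1
    have hm : emb i₀ N D h ∈ H.map (emb i₀ N D) := ⟨h, hh, rfl⟩
    rw [MonoidHom.comp_apply] at h1
    suffices emb i₀ N D h = 1 by rw [← retr_emb (i₀ := i₀) (N := N) (D := D) h, this, _root_.map_one]
    obtain ⟨u, hu, hu'⟩ := exists_reduced (emb i₀ N D h)
    rw [← hu'] at hm h1 ⊢
    have := (goodSub_emb hN hN0 hH u hu hm).isReduced_map (fun z e z' e' h => h.zero hN) hu
    rw [merge_mk] at h1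
    have := eq_nil_of_mk_eq_one this h1
    rw [List.map_eq_nil_iff] at this
    rw [this]; rfl
  refine ⟨?_, inj hH, inj hK, ?_⟩
  · intro g
    have : (merge.comp (emb i₀ N D)).comp
        (FreeGroup.map fun a => a.map fun _ => i₀) = MonoidHom.id _ := by
      ext a
      match a with
      | none => simp [emb, merge]
      | some () => simp [emb, merge]
    exact ⟨_, DFunLike.congr_fun this g⟩
  · rintro g ⟨h, hh, k, hk, hne, hhk⟩
    obtain ⟨w, hw, rfl⟩ := exists_reduced g
    obtain ⟨g, hg, hg'⟩ := merge_lift (fun z e z' e' h => h.zero hN)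
      (fun _ _ _ _ _ _ _ _ _ _ _ a b c d => CAdm.det hN hN0 a b c d) w.length
      (H.map (emb i₀ N D)) (K.map (emb i₀ N D)) w (goodSub_emb hN hN0 hH) (goodSub_emb hN hN0 hK)
      (noPow_emb nH) le_rfl hw ⟨emb i₀ N D h, ⟨h, hh, rfl⟩, emb i₀ N D k, ⟨k, hk, rfl⟩, by
        intro h1
        apply hne
        rw [← retr_emb (i₀ := i₀) (N := N) (D := D) h, h1, _root_.map_one], hhk⟩
    refine ⟨retr i₀ N D g, ?_, ?_⟩
    · rw [MonoidHom.comp_apply, merge_emb_retr, hg]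
    · intro h hh k hk hhk
      have := congrArg (retr i₀ N D) (hg' _ ⟨h, hh, rfl⟩ _ ⟨k, hk, rfl⟩ hhk)
      rwa [_root_.map_mul, _root_.map_mul, _root_.map_inv, retr_emb, retr_emb] at this

end Specialize
end FreeGroup.GenJoin

/-! ### Finite cores of finitely generated subgroups -/

namespace FreeGroup.GenJoin

section Core
variable {α Ω : Type*}

lemma suffix_append_cases {s u v : List α} (h : s <:+ u ++ v) :
    s <:+ v ∨ ∃ s', s = s' ++ v ∧ s' <:+ u := by
  obtain ⟨p, hp⟩ := h
  rcases List.append_eq_append_iff.1 hp with ⟨a, rfl, rfl⟩ | ⟨a, rfl, rfl⟩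
  · exact Or.inr ⟨a, rfl, ⟨p, rfl⟩⟩
  · exact Or.inl ⟨a, rfl⟩

/-- The points visited by reduced loops: if the stabilizer of `o` is finitely generated, then the
reduced words fixing `o` only lead through a finite set of points. -/
lemma exists_core (φ : FreeGroup α →* Equiv.Perm Ω) (o : Ω) {H : Subgroup (FreeGroup α)}
    (hH : ∀ x, x ∈ H ↔ φ x o = o) (fg : H.FG) :
    ∃ C : Set Ω, C.Finite ∧ ∀ w, IsReduced w → mk w ∈ H → ∀ s, s <:+ w → φ (mk s) o ∈ C := by
  classical
  obtain ⟨T, hT⟩ := fg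
  let C : Set Ω := insert o (⋃ t ∈ T, (fun s => φ (mk s) o) '' {s | s ∈ t.toWord.tails})
  refine ⟨C, ?_, ?_⟩
  · refine Set.Finite.insert _ (T.finite_toSet.biUnion fun t _ => ?_)
    exact (List.finite_toSet _).image _
  have main : ∀ x ∈ H, ∃ w, mk w = x ∧ ∀ s, s <:+ w → φ (mk s) o ∈ C := by
    intro x hx
    rw [← hT] at hx
    induction hx using Subgroup.closure_induction with
    | mem t ht =>
      refine ⟨t.toWord, mk_toWord, fun s hs => Set.mem_insert_of_mem _ ?_⟩
      exact Set.mem_biUnion ht ⟨s, (List.mem_tails _ _).2 hs, rfl⟩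
    | one =>
      refine ⟨[], rfl, fun s hs => ?_⟩
      rw [List.suffix_nil.1 hs]
      exact Or.inl (by rw [← one_eq_mk, _root_.map_one]; rfl)
    | mul x y hx hy ihx ihy =>
      obtain ⟨u, rfl, hu⟩ := ihx
      obtain ⟨v, rfl, hv⟩ := ihy
      rw [hT] at hy
      refine ⟨u ++ v, (mul_mk).symm, fun s hs => ?_⟩
      rcases suffix_append_cases hs with hs | ⟨s', rfl, hs2⟩
      · exact hv s hs
      · rw [← mul_mk, _root_.map_mul, Equiv.Perm.mul_apply, (hH _).1 hy]
        exact hu s' hs2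
    | inv x hx ih =>
      obtain ⟨u, rfl, hu⟩ := ih
      rw [hT] at hx
      refine ⟨invRev u, (inv_mk).symm, fun s hs => ?_⟩
      obtain ⟨p, hp⟩ := hs
      have h1 : u = invRev s ++ invRev p := by rw [← invRev_append, hp, invRev_invRev]
      have h2 : φ (mk s) o = φ (mk (invRev p)) o := by
        have h3 := (hH _).1 hx
        rw [h1, ← mul_mk, ← inv_mk, _root_.map_mul, _root_.map_inv, Equiv.Perm.mul_apply,
          Equiv.Perm.inv_eq_iff_eq] at h3
        exact h3.symm
      rw [h2]
      exact hu _ ⟨invRev s, h1.symm⟩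
  intro w hw hwH
  obtain ⟨u, hu, huC⟩ := main _ hwH
  have hred : Red u w := by
    have := reduce.sound hu
    rw [hw.reduce_eq] at this
    rw [← this]
    exact reduce.red
  clear hw hwH hu
  induction hred with
  | refl => exact huC
  | tail _ hstep ih =>
    intro s hs
    cases hstep with
    | @not L₁ L₂ x b =>
      rcases suffix_append_cases hs with hs | ⟨s', rfl, hs2⟩
      · exact ih s (hs.trans ⟨L₁ ++ [(x, b), (x, !b)], by simp⟩)
      · have := ih (s' ++ (x, b) :: (x, !b) :: L₂) (by
          obtain ⟨p, rfl⟩ := hs2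
          exact ⟨p, by simp⟩)
        rwa [show mk (s' ++ (x, b) :: (x, !b) :: L₂) = mk (s' ++ L₂) from
          Quot.sound Red.Step.not] at this

lemma abs_expsum_le (ys : List (α × Bool)) : |expsum ys| ≤ ys.length := by
  induction ys with
  | nil => simp [expsum]
  | cons a ys ih =>
    rw [expsum_cons, List.length_cons]
    have : |(if a.2 then 1 else -1 : ℤ)| = 1 := by split_ifs <;> simp
    have := abs_add_le (if a.2 then 1 else -1 : ℤ) (expsum ys)
    push_cast
    omega

/-- If no conjugate of a power of `none` lies in a finitely generated subgroup, then the runs of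
`none` in its reduced words are bounded. -/
lemma exists_bd {H : Subgroup (FreeGroup (Option α))} (fg : H.FG) (nH : NoPow H) :
    ∃ D : ℕ, ∀ w, IsReduced w → mk w ∈ H → Bd D w := by
  obtain ⟨C, hC, hcore⟩ := exists_core
    (MulAction.toPermHom (FreeGroup (Option α)) (FreeGroup (Option α) ⧸ H)) (1 : FreeGroup (Option α))
    (H := H) (fun x => by
      change x ∈ H ↔ ((x * 1 : FreeGroup (Option α)) : FreeGroup (Option α) ⧸ H) = (1 : FreeGroup (Option α))
      rw [QuotientGroup.eq, mul_one, mul_one, H.inv_mem_iff]) fg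
  refine ⟨hC.toFinset.card, ?_⟩
  rintro w hw hwH ys ⟨p, q, rfl⟩ hys
  refine (abs_expsum_le ys).trans ?_
  by_contra! hlt
  have hlt : hC.toFinset.card < (Finset.range ys.length).card := by simpa using hlt
  obtain ⟨i, hi, j, hj, hne, heq⟩ := Finset.exists_ne_map_eq_of_card_lt_of_maps_to hlt
    (f := fun i => MulAction.toPermHom (FreeGroup (Option α)) (FreeGroup (Option α) ⧸ H)
      (mk (ys.drop i ++ q)) (1 : FreeGroup (Option α))) (by
      intro i hi
      simp only [Set.Finite.coe_toFinset]
      exact hcore _ hw hwH _ ⟨p ++ ys.take i, by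
        rw [← List.append_assoc, List.append_assoc p, List.take_append_drop]⟩)
  have hd : ∀ i, mk (ys.drop i) = of none ^ expsum (ys.drop i) := fun i =>
    mk_of_none fun a ha => hys a (List.mem_of_mem_drop ha)
  have hysr : IsReduced ys := hw.factor ⟨p, q, rfl⟩
  refine nH (mk q)⁻¹ (-expsum (ys.drop i) + expsum (ys.drop j)) ?_ ?_
  · intro h0
    have : mk (ys.drop i) = mk (ys.drop j) := by
      rw [hd, hd]; congr 1; omega
    have := eq_of_mk_eq (hysr.factor (List.drop_suffix i ys).isInfix)
      (hysr.factor (List.drop_suffix j ys).isInfix) this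
    have := congrArg List.length this
    simp at this hi hj
    omega
  · have h1 : ((mk (ys.drop i ++ q) * 1 : FreeGroup (Option α)) : FreeGroup (Option α) ⧸ H) =
        (mk (ys.drop j ++ q) * 1 : FreeGroup (Option α)) := heq
    rw [QuotientGroup.eq, mul_one, mul_one, ← mul_mk, ← mul_mk, hd, hd] at h1
    convert h1 using 1
    rw [zpow_add]
    group

lemma exists_cancel {b : List (α × Bool)} (hb : IsReduced b) {a : List (α × Bool)}
    (ha : IsReduced a) : ∃ P c S, a = P ++ c ∧ b = invRev c ++ S ∧ IsReduced (P ++ S) := by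
  induction a using List.reverseRecOn generalizing b with
  | nil => exact ⟨[], [], b, rfl, rfl, hb⟩
  | append_singleton a l ih =>
    rcases cons_cases hb l with ⟨b, rfl⟩ | h
    · obtain ⟨P, c, S, rfl, rfl, h⟩ := ih (b := b) (hb.factor ⟨[linv l], [], by simp⟩)
        (ha.factor ⟨[], [l], by simp⟩)
      exact ⟨P, c ++ [l], S, by simp, by rw [invRev_concat']; rfl, h⟩
    · refine ⟨a ++ [l], [], b, by simp, rfl, ?_⟩
      exact IsReduced.append_overlap (L₃ := b) ha h (by simp)

/-- The list `w` repeated `n` times. -/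
def rep (n : ℕ) (w : List (α × Bool)) : List (α × Bool) := (List.replicate n w).flatten

lemma rep_add (m n : ℕ) (w : List (α × Bool)) : rep (m + n) w = rep m w ++ rep n w := by
  rw [rep, List.replicate_add, List.flatten_append]; rfl

lemma mk_rep (n : ℕ) (w : List (α × Bool)) : mk (rep n w) = mk w ^ n := (pow_mk ..).symm

lemma length_rep (n : ℕ) (w : List (α × Bool)) : (rep n w).length = n * w.length := by
  simp [rep]

lemma rep_succ (n : ℕ) (w : List (α × Bool)) : rep (n + 1) w = w ++ rep n w := by
  simp [rep, List.replicate_succ]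

lemma isReduced_rep {w : List (α × Bool)} (hne : w ≠ []) (hw : IsReduced (w ++ w)) (n : ℕ) :
    IsReduced (rep n w) := by
  induction n with
  | zero => exact IsReduced.nil
  | succ n ih =>
    cases n with
    | zero => simpa [rep] using hw.factor ⟨[], w, rfl⟩
    | succ n =>
      rw [rep_succ, rep_succ, ← List.append_assoc]
      rw [rep_succ] at ih
      exact hw.append_overlap ih hne

/-- A periodic trajectory of a cyclically reduced word stays inside a finite set of points. -/
lemma exists_periodic_core (φ : FreeGroup α →* Equiv.Perm Ω) (o : Ω) {H : Subgroup (FreeGroup α)}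
    (hH : ∀ x, x ∈ H ↔ φ x o = o) (fg : H.FG) :
    ∃ C : Set Ω, C.Finite ∧ ∀ w, w ≠ [] → IsReduced (w ++ w) → ∀ x n, 0 < n →
      (φ (mk w) ^ n) (φ x o) = φ x o → ∀ s, s <:+ w → φ (mk s) (φ x o) ∈ C := by
  obtain ⟨C, hC, hcore⟩ := exists_core φ o hH fg
  refine ⟨C, hC, ?_⟩
  rintro w hne hw x n hn hper s ⟨r, rfl⟩
  obtain ⟨B, hB, rfl⟩ := exists_reduced x
  have hper' : ∀ k, φ (mk (r ++ s) ^ (n * k)) (φ (mk B) o) = φ (mk B) o := by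
    intro k
    rw [_root_.map_pow, pow_mul]
    exact Function.IsFixedPt.perm_pow hper k
  have hlen : ∀ m, B.length ≤ m → B.length ≤ (rep m (r ++ s)).length := by
    intro m hm
    rw [length_rep]
    have := List.length_pos_of_ne_nil hne
    nlinarith
  -- `x⁻¹ * w ^ (m1 + 1 + m2) * x` lies in `H`; both outer powers are longer than `x`, so that the
  -- middle copy of `w` survives in its reduced word
  set m2 := n * (B.length + 1)
  set m1 := n * (B.length + 1) + (n - 1)
  have hm2 : B.length ≤ m2 := by simp only [m2]; nlinarith
  have hm1 : B.length ≤ m1 := by simp only [m1]; nlinarith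
  have hW := isReduced_rep hne hw (m1 + 1 + m2)
  -- cancel `B` against the end of the power, then `B⁻¹` against its beginning
  obtain ⟨P, c, S, hPc, hcS, hPS⟩ := exists_cancel hB hW
  obtain ⟨P', c', S', hPc', hcS', hPS'⟩ := exists_cancel hPS (isReduced_invRev hB)
  have hcl : c.length ≤ B.length := by
    have := congrArg List.length hcS
    simp at this; omega
  have hcl' : c'.length ≤ B.length := by
    have := congrArg List.length hPc'
    simp at this; omega
  have hw1 : rep (m1 + 1 + m2) (r ++ s) = (rep m1 (r ++ s) ++ r) ++ (s ++ rep m2 (r ++ s)) := by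
    rw [rep_add, rep_add]; simp [rep]
  obtain ⟨Q, hQ⟩ : c <:+ rep m2 (r ++ s) :=
    List.suffix_of_suffix_length_le (l₃ := rep (m1 + 1 + m2) (r ++ s)) ⟨P, hPc.symm⟩
      ⟨rep m1 (r ++ s) ++ r ++ s, by rw [hw1]; simp⟩ (hcl.trans (hlen _ hm2))
  have hP : P = rep m1 (r ++ s) ++ r ++ s ++ Q := by
    rw [hw1, ← hQ] at hPc
    have : (rep m1 (r ++ s) ++ r ++ s ++ Q) ++ c = P ++ c := by rw [← hPc]; simp
    exact (List.append_cancel_right this).symm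
  have hsuf : s ++ Q ++ S <:+ S' := by
    refine List.suffix_of_suffix_length_le (l₃ := P ++ S) ⟨rep m1 (r ++ s) ++ r, by
      rw [hP]; simp⟩ ⟨invRev c', hcS'.symm⟩ ?_
    have h1 := congrArg List.length hcS'
    have h2 := hlen _ hm1
    rw [hP] at h1
    simp only [List.length_append, invRev_length] at h1 ⊢
    omega
  have hmem : mk (P' ++ S') ∈ H := by
    have e1 : mk (P' ++ S') = mk (invRev B) * mk (P ++ S) := by
      rw [hPc', hcS', ← mul_mk, ← mul_mk, ← mul_mk, ← inv_mk (L := c')]; group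
    have e2 : mk (P ++ S) = mk (r ++ s) ^ (m1 + 1 + m2) * mk B := by
      rw [← mk_rep, hPc, hcS, ← mul_mk, ← mul_mk, ← mul_mk, ← inv_mk]; group
    rw [hH, e1, e2, ← inv_mk, _root_.map_mul, _root_.map_mul, _root_.map_inv, Equiv.Perm.mul_apply,
      Equiv.Perm.inv_eq_iff_eq, Equiv.Perm.mul_apply]
    have : m1 + 1 + m2 = n * (2 * B.length + 3) := by
      simp only [m1, m2]
      obtain ⟨n, rfl⟩ : ∃ k, n = k + 1 := ⟨n - 1, by omega⟩
      simp only [Nat.add_sub_cancel]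
      ring
    rw [this, hper']
  have := hcore _ hPS' hmem _ (hsuf.trans ⟨P', rfl⟩)
  have e3 : mk (s ++ Q ++ S) = mk s * (mk (r ++ s) ^ m2 * mk B) := by
    rw [← mk_rep, ← hQ, hcS, ← mul_mk, ← mul_mk, ← mul_mk, ← mul_mk, ← inv_mk]; group
  rw [e3, _root_.map_mul, _root_.map_mul, Equiv.Perm.mul_apply, Equiv.Perm.mul_apply, hper'] at this
  exact this

end Core
end FreeGroup.GenJoin

/-! ### A basis element without periodic points -/

namespace FreeGroup.GenJoin

section Periodic
variable {J Ω : Type*}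

/-- The periodic points of a permutation. -/
def Per (σ : Equiv.Perm Ω) : Set Ω := {p | ∃ n, 0 < n ∧ (σ ^ n) p = p}

/-- All periodic trajectories of cyclically reduced words stay inside one finite set. -/
def Tame (φ : FreeGroup J →* Equiv.Perm Ω) : Prop :=
  ∃ C : Set Ω, C.Finite ∧ ∀ w, w ≠ [] → IsReduced (w ++ w) → ∀ p ∈ Per (φ (mk w)),
    ∀ s, s <:+ w → φ (mk s) p ∈ C

lemma Tame.finite {φ : FreeGroup J →* Equiv.Perm Ω} (h : Tame φ) (j : J) :
    (Per (φ (of j))).Finite := by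
  obtain ⟨C, hC, h⟩ := h
  refine hC.subset fun p hp => ?_
  have := h [(j, true)] (by simp) (by simp [IsReduced]) p hp [] (List.nil_suffix)
  rwa [← one_eq_mk, _root_.map_one] at this

lemma exists_common_period {σ : Equiv.Perm Ω} (h : (Per σ).Finite) :
    ∃ N, 0 < N ∧ ∀ k, ∀ p ∈ Per σ, (σ ^ (N * k)) p = p := by
  classical
  have : ∀ p : Ω, ∃ n, 0 < n ∧ (p ∈ Per σ → (σ ^ n) p = p) := by
    intro p
    by_cases hp : p ∈ Per σ
    · obtain ⟨n, h1, h2⟩ := hp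
      exact ⟨n, h1, fun _ => h2⟩
    · exact ⟨1, one_pos, fun h => (hp h).elim⟩
  choose n hn0 hn using this
  refine ⟨∏ p ∈ h.toFinset, n p, Finset.prod_pos fun p _ => hn0 p, fun k p hp => ?_⟩
  obtain ⟨m, hm⟩ := Finset.dvd_prod_of_mem n (h.mem_toFinset.2 hp)
  rw [hm, mul_assoc, pow_mul]
  exact Function.IsFixedPt.perm_pow (hn p hp) _

/-- Replacing the generator `i` by `j ^ N * i` for suitable `N` moves its periodic points into
those of `j`, in such a way that they are permuted by the old `i`. -/
lemma exists_transvection {φ : FreeGroup J →* Equiv.Perm Ω} (h : Tame φ) (i j : J) :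
    ∃ N : ℕ, Per (φ (of j ^ N * of i)) ⊆ Per (φ (of j)) ∧
      ∀ p ∈ Per (φ (of j ^ N * of i)), φ (of i) p ∈ Per (φ (of j ^ N * of i)) := by
  obtain ⟨N₀, hN₀, hfix⟩ := exists_common_period (h.finite j)
  obtain ⟨C, hC, h⟩ := h
  set N := N₀ * (hC.toFinset.card + 1) with hN
  have hmkw : ∀ k, mk (rep k [(j, true)] ++ [(i, true)]) = of j ^ k * of i := by
    intro k
    rw [← mul_mk, mk_rep]; rfl
  have hz : ∀ p ∈ Per (φ (of j ^ N * of i)), φ (of i) p ∈ Per (φ (of j)) := by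
    intro p hp
    have hlt : hC.toFinset.card < (Finset.range (N + 1)).card := by
      rw [Finset.card_range, hN]; nlinarith
    have hred : IsReduced ((rep N [(j, true)] ++ [(i, true)]) ++
        (rep N [(j, true)] ++ [(i, true)])) := by
      have hall : ∀ a ∈ (rep N [(j, true)] ++ [(i, true)]) ++
        (rep N [(j, true)] ++ [(i, true)]), a.2 = true := by
        intro a ha
        simp [rep] at ha
        grind
      refine List.Pairwise.isChain ?_
      refine List.Pairwise.imp_of_mem (R := fun _ _ => True) ?_ (by simp [List.pairwise_iff_getElem])
      intro a b ha hb _ _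
      rw [hall a ha, hall b hb]
    obtain ⟨k, hk, l, hl, hne, heq⟩ := Finset.exists_ne_map_eq_of_card_lt_of_maps_to hlt
      (f := fun k => φ (of j ^ k * of i) p) (by
        intro k hk
        simp only [Set.Finite.coe_toFinset]
        rw [← hmkw]
        refine h (rep N [(j, true)] ++ [(i, true)]) (by simp) hred p (by rwa [hmkw]) _
          ⟨rep (N - k) [(j, true)], ?_⟩
        rw [← List.append_assoc, ← rep_add, Nat.sub_add_cancel]
        simp at hk; omega)
    wlog hkl : k < l generalizing k l
    · exact this l hl k hk hne.symm heq.symm (by omega)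
    refine ⟨l - k, by omega, ?_⟩
    obtain ⟨d, rfl⟩ := Nat.exists_eq_add_of_lt hkl
    have e : k + d + 1 - k = d + 1 := by omega
    simp only [_root_.map_mul, _root_.map_pow, Equiv.Perm.mul_apply, add_assoc, pow_add _ k] at heq
    rw [e]
    exact ((φ (of j) ^ k).injective heq).symm
  have hyz : ∀ p ∈ Per (φ (of j ^ N * of i)), φ (of j ^ N * of i) p = φ (of i) p := by
    intro p hp
    rw [_root_.map_mul, _root_.map_pow, Equiv.Perm.mul_apply]
    exact hfix _ _ (hz p hp)
  have hinv : ∀ (σ : Equiv.Perm Ω), ∀ p ∈ Per σ, ∀ k : ℕ, (σ ^ k) p ∈ Per σ := by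
    rintro σ p ⟨n, hn, hp⟩ k
    refine ⟨n, hn, ?_⟩
    rw [← Equiv.Perm.mul_apply, ← pow_add, add_comm, pow_add, Equiv.Perm.mul_apply, hp]
  refine ⟨N, fun p hp => ?_, fun p hp => ?_⟩
  · obtain ⟨n, hn, hp'⟩ := id hp
    obtain ⟨n, rfl⟩ : ∃ k, n = k + 1 := ⟨n - 1, by omega⟩
    have hq := hinv _ p hp n
    rw [pow_succ', Equiv.Perm.mul_apply, hyz _ hq] at hp'
    rw [← hp']
    exact hz _ hq
  · rw [← hyz p hp]
    exact hinv _ p hp 1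

/-- The automorphism `i ↦ j ^ N * i` fixing the other generators. -/
lemma exists_aut {i j : J} (hij : i ≠ j) (N : ℕ) :
    ∃ τ : FreeGroup J ≃* FreeGroup J, τ (of i) = of j ^ N * of i := by
  classical
  let f : ℤ → FreeGroup J →* FreeGroup J := fun n =>
    lift (fun k => if k = i then of j ^ n * of i else of k)
  have hf : ∀ n, (f n).comp (f (-n)) = MonoidHom.id _ := by
    intro n
    ext k
    by_cases hk : k = i
    · subst hk
      simp [f, hij.symm, _root_.map_mul, _root_.map_zpow]
    · simp [f, hk]
  refine ⟨MonoidHom.toMulEquiv (f N) (f (-N)) (by simpa using hf (-N)) (hf N), ?_⟩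
  simp [f]

/-- If every nonempty finite set of points is moved, then after an automorphism some generator
has no periodic points. -/
theorem exists_aperiodic (φ : FreeGroup J →* Equiv.Perm Ω) (hJ : Nontrivial J)
    (ht : ∀ ψ : FreeGroup J ≃* FreeGroup J, Tame (φ.comp ψ.toMonoidHom))
    (hA : ∀ A : Set Ω, A.Finite → A.Nonempty → ∃ x, ∃ p ∈ A, φ x p ∉ A) :
    ∃ (ψ : FreeGroup J ≃* FreeGroup J) (j : J), Per (φ (ψ (of j))) = ∅ := by
  classical
  obtain ⟨j₀, -, -⟩ := hJ
  have : Nonempty ((FreeGroup J ≃* FreeGroup J) × J) := ⟨(MulEquiv.refl _, j₀)⟩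
  obtain ⟨⟨ψ, j⟩, hmin⟩ : ∃ a : (FreeGroup J ≃* FreeGroup J) × J, ∀ b : (FreeGroup J ≃* FreeGroup J) × J,
      (Per (φ (a.1 (of a.2)))).ncard ≤ (Per (φ (b.1 (of b.2)))).ncard := by
    refine ⟨Function.argmin (fun a : (FreeGroup J ≃* FreeGroup J) × J =>
      (Per (φ (a.1 (of a.2)))).ncard), fun b => Function.argmin_le (fun a : (FreeGroup J ≃* FreeGroup J) × J =>
      (Per (φ (a.1 (of a.2)))).ncard) b⟩
  refine ⟨ψ, j, ?_⟩
  by_contra hne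
  have hne := Set.nonempty_iff_ne_empty.2 hne
  have hfin : (Per (φ (ψ (of j)))).Finite := (ht ψ).finite j
  have hi : ∀ i, ∀ p ∈ Per (φ (ψ (of j))), φ (ψ (of i)) p ∈ Per (φ (ψ (of j))) := by
    intro i
    by_cases hij : i = j
    · subst hij
      rintro p ⟨n, hn, hp⟩
      refine ⟨n, hn, ?_⟩
      rw [← Equiv.Perm.mul_apply, ← pow_succ, pow_succ', Equiv.Perm.mul_apply, hp]
    · obtain ⟨N, h1, h2⟩ := exists_transvection (ht ψ) i j
      obtain ⟨τ, hτ⟩ := exists_aut hij N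
      have hm := hmin (τ.trans ψ, i)
      simp only [MulEquiv.trans_apply, hτ] at hm
      have := Set.eq_of_subset_of_ncard_le h1 hm hfin
      rw [this] at h2
      exact h2
  obtain ⟨x, p, hp, hx⟩ := hA _ hfin hne
  refine hx ?_
  obtain ⟨x, rfl⟩ := ψ.surjective x
  clear hx
  induction x using FreeGroup.induction_on generalizing p with
  | C1 => simpa [_root_.map_one] using hp
  | of i => exact hi i p hp
  | inv_of i _ =>
    have himg : φ (ψ (of i)) '' Per (φ (ψ (of j))) = Per (φ (ψ (of j))) :=
      Set.eq_of_subset_of_ncard_le (Set.image_subset_iff.2 (hi i))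
        (Set.ncard_image_of_injective _ (φ (ψ (of i))).injective).ge hfin
    rw [← himg] at hp
    obtain ⟨q, hq, rfl⟩ := hp
    rw [_root_.map_inv, _root_.map_inv, (Equiv.Perm.inv_eq_iff_eq.2 rfl)]
    exact hq
  | mul x y hx hy =>
    rw [_root_.map_mul, _root_.map_mul, Equiv.Perm.mul_apply]
    exact hx _ (hy _ hp)

end Periodic
end FreeGroup.GenJoin

/-! ### Existence of the quotient map -/

namespace FreeGroup.GenJoin

section Exists

lemma Lifts.comp_equiv {G G₁ G' : Type*} [Group G] [Group G₁] [Group G'] {ρ : G₁ →* G'}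
    (e : G ≃* G₁) {H K : Subgroup G} (h : Lifts ρ (H.map e.toMonoidHom) (K.map e.toMonoidHom)) :
    Lifts (ρ.comp e.toMonoidHom) H K := by
  obtain ⟨h1, h2, h3, h4⟩ := h
  refine ⟨h1.comp e.surjective, fun x hx hx1 => ?_, fun x hx hx1 => ?_, ?_⟩
  · simpa using h2 (e x) ⟨x, hx, rfl⟩ hx1
  · simpa using h3 (e x) ⟨x, hx, rfl⟩ hx1
  · rintro g ⟨x, hx, y, hy, hx1, hxy⟩
    obtain ⟨z, hz, hz'⟩ := h4 g ⟨e x, ⟨x, hx, rfl⟩, e y, ⟨y, hy, rfl⟩, by simpa using hx1, hxy⟩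
    refine ⟨e.symm z, by simpa using hz, fun x hx y hy hxy => e.injective ?_⟩
    simpa using hz' (e x) ⟨x, hx, rfl⟩ (e y) ⟨y, hy, rfl⟩ hxy

lemma Lifts.equiv_comp {G G' G₁ : Type*} [Group G] [Group G₁] [Group G'] {ρ : G →* G'}
    (e : G' ≃* G₁) {H K : Subgroup G} (h : Lifts ρ H K) : Lifts (e.toMonoidHom.comp ρ) H K := by
  obtain ⟨h1, h2, h3, h4⟩ := h
  refine ⟨e.surjective.comp h1, fun x hx hx1 => ?_, fun x hx hx1 => ?_, ?_⟩
  · exact h2 x hx (by simpa using hx1)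
  · exact h3 x hx (by simpa using hx1)
  · rintro g ⟨x, hx, y, hy, hx1, hxy⟩
    obtain ⟨g, rfl⟩ := e.surjective g
    have key : ∀ x y, (e.toMonoidHom.comp ρ) x = e g * (e.toMonoidHom.comp ρ) y * (e g)⁻¹ →
        ρ x = g * ρ y * g⁻¹ := by
      intro x y h
      apply e.injective
      simpa using h
    obtain ⟨z, hz, hz'⟩ := h4 g ⟨x, hx, y, hy, hx1, key _ _ hxy⟩
    exact ⟨z, by simp [hz], fun x hx y hy hxy => hz' x hx y hy (key _ _ hxy)⟩

lemma fg_map {G G' : Type*} [Group G] [Group G'] {H : Subgroup G} (h : H.FG) (f : G →* G') :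
    (H.map f).FG := by
  classical
  obtain ⟨T, hT⟩ := h
  exact ⟨T.image f, by rw [Finset.coe_image, ← MonoidHom.map_closure, hT]⟩

variable {J : Type*}

/-- An action with finitely many orbits and finitely generated stabilizers is tame. -/
lemma tame_of_base {Ω I : Type*} [Finite I] (φ : FreeGroup J →* Equiv.Perm Ω) (o : I → Ω)
    (htr : ∀ p, ∃ i x, φ x (o i) = p) (H : I → Subgroup (FreeGroup J))
    (hH : ∀ i x, x ∈ H i ↔ φ x (o i) = o i) (fg : ∀ i, (H i).FG) : Tame φ := by
  choose C hC h using fun i => exists_periodic_core φ (o i) (hH i) (fg i)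
  refine ⟨⋃ i, C i, Set.finite_iUnion hC, ?_⟩
  rintro w hne hw p ⟨n, hn, hp⟩ s hs
  obtain ⟨i, x, rfl⟩ := htr p
  exact Set.mem_iUnion.2 ⟨i, h i w hne hw x n hn hp s hs⟩

/-- Some automorphic image of a basis element has no conjugate of a nonzero power in either of two
finitely generated subgroups of infinite index. -/
lemma exists_free_generator [Nontrivial J] {H K : Subgroup (FreeGroup J)} (hH : H.FG) (hK : K.FG)
    (iH : H.index = 0) (iK : K.index = 0) :
    ∃ (ψ : FreeGroup J ≃* FreeGroup J) (j : J), ∀ M, M = H ∨ M = K →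
      ∀ x (n : ℤ), n ≠ 0 → x * ψ (of j) ^ n * x⁻¹ ∉ M := by
  classical
  let M : Bool → Subgroup (FreeGroup J) := fun b => if b then H else K
  let Ω := Σ b, FreeGroup J ⧸ M b
  let φ : FreeGroup J →* Equiv.Perm Ω := MulAction.toPermHom _ _
  have hφ : ∀ x b (y : FreeGroup J), φ x ⟨b, (y : FreeGroup J ⧸ M b)⟩ =
    ⟨b, ((x * y : FreeGroup J) : FreeGroup J ⧸ M b)⟩ := fun _ _ _ => rfl
  have hfix : ∀ x b (y : FreeGroup J), φ x ⟨b, (y : FreeGroup J ⧸ M b)⟩ = ⟨b, y⟩ ↔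
      y⁻¹ * x⁻¹ * y ∈ M b := by
    intro x b y
    rw [hφ, Sigma.mk.injEq, heq_eq_eq, QuotientGroup.eq]
    simp
  have hM : ∀ b, (M b).FG ∧ (M b).index = 0 := by
    intro b; cases b
    · exact ⟨hK, iK⟩
    · exact ⟨hH, iH⟩
  obtain ⟨ψ, j, hj⟩ := exists_aperiodic φ inferInstance (fun ψ => by
    refine tame_of_base _ (I := Bool) (fun b => ⟨b, (1 : FreeGroup J)⟩) ?_
      (fun b => (M b).comap ψ.toMonoidHom) ?_ ?_
    · rintro ⟨b, p⟩
      obtain ⟨x, rfl⟩ := QuotientGroup.mk_surjective p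
      refine ⟨b, ψ.symm x, ?_⟩
      simp [hφ]
    · intro b x
      simp [hfix]
    · intro b
      have := Subgroup.comap_equiv_eq_map_symm' ψ (M b)
      change ((M b).comap ψ.toMonoidHom).FG
      rw [this]
      exact fg_map (hM b).1 _) (by
    rintro A hA ⟨⟨b, p⟩, hp⟩
    by_contra! hinv
    obtain ⟨x, rfl⟩ := QuotientGroup.mk_surjective p
    have : Infinite (FreeGroup J ⧸ M b) := by
      exact (Nat.card_eq_zero.1 (hM b).2).resolve_left fun h => h.false (1 : FreeGroup J)
    refine Set.infinite_univ (α := FreeGroup J ⧸ M b) ?_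
    refine (hA.preimage (f := Sigma.mk b) sigma_mk_injective.injOn).subset ?_
    intro q _
    obtain ⟨y, rfl⟩ := QuotientGroup.mk_surjective q
    have := hinv (y * x⁻¹) _ hp
    rwa [hφ, inv_mul_cancel_right] at this)
  refine ⟨ψ, j, ?_⟩
  have key : ∀ b x (n : ℕ), 0 < n → x * ψ (of j) ^ n * x⁻¹ ∉ M b := by
    intro b x n hn hmem
    have : (⟨b, (x⁻¹ : FreeGroup J)⟩ : Ω) ∈ Per (φ (ψ (of j))) := by
      refine ⟨n, hn, ?_⟩
      rw [← _root_.map_pow, hfix, ← inv_mem_iff]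
      simpa [mul_assoc] using hmem
    rw [hj] at this
    exact this
  intro M' hM' x n hn hmem
  obtain ⟨b, rfl⟩ : ∃ b, M' = M b := by
    rcases hM' with rfl | rfl
    · exact ⟨true, rfl⟩
    · exact ⟨false, rfl⟩
  refine key b x n.natAbs (by omega) ?_
  rcases Int.natAbs_eq n with h | h
  · rw [h, zpow_natCast] at hmem
    exact hmem
  · rw [h, zpow_neg, zpow_natCast] at hmem
    rw [← inv_mem_iff]
    simpa [mul_assoc] using hmem

lemma Bd.mono {ι : Type*} {D D' : ℕ} (h : D ≤ D') {w : List (Option ι × Bool)} (hw : Bd D w) :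
    Bd D' w := fun ys h1 h2 => (hw ys h1 h2).trans (by exact_mod_cast h)

/-- A free group on at least two generators has a quotient map with the lifting property onto the
free group of rank two, for any two finitely generated subgroups of infinite index. -/
theorem exists_lifts_freeGroup [Countable J] [Nontrivial J] {H K : Subgroup (FreeGroup J)}
    (hH : H.FG) (hK : K.FG) (iH : H.index = 0) (iK : K.index = 0) :
    ∃ ρ : FreeGroup J →* FreeGroup (Fin 2), Lifts ρ H K := by
  classical
  obtain ⟨ψ, j, hj⟩ := exists_free_generator hH hK iH iK
  let ι := {i : J // i ≠ j}
  let Θ : FreeGroup J ≃* FreeGroup (Option ι) :=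
    ψ.symm.trans (freeGroupCongr (Equiv.optionSubtypeNe j).symm)
  have hΘ : Θ (ψ (of j)) = of none := by
    simp only [Θ, MulEquiv.trans_apply, MulEquiv.symm_apply_apply, freeGroupCongr_apply, map.of]
    exact congrArg of ((Equiv.symm_apply_eq _).2 rfl)
  have nP : ∀ M, M = H ∨ M = K → NoPow (M.map Θ.toMonoidHom) := by
    rintro M hM x n hn ⟨y, hy, hxy⟩
    refine hj M hM (Θ.symm x) n hn ?_
    suffices Θ.symm x * ψ (of j) ^ n * (Θ.symm x)⁻¹ = y by rw [this]; exact hy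
    apply Θ.injective
    simpa [_root_.map_mul, _root_.map_zpow, hΘ] using hxy.symm
  obtain ⟨D₁, hD₁⟩ := exists_bd (fg_map hH Θ.toMonoidHom) (nP H (Or.inl rfl))
  obtain ⟨D₂, hD₂⟩ := exists_bd (fg_map hK Θ.toMonoidHom) (nP K (Or.inr rfl))
  obtain ⟨i₀, hi₀⟩ := exists_ne j
  obtain ⟨f, hf⟩ := Countable.exists_injective_nat ι
  -- swapping two values makes `N` vanish at `i₀`
  let N : ι → ℕ := fun i => Equiv.swap (f ⟨i₀, hi₀⟩) 0 (f i)
  have := exists_lifts (D := max D₁ D₂) (N := N) (⟨i₀, hi₀⟩ : ι)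
    ((Equiv.injective _).comp hf) (by simp [N])
    (fun w h1 h2 => (hD₁ w h1 h2).mono (le_max_left _ _))
    (fun w h1 h2 => (hD₂ w h1 h2).mono (le_max_right _ _)) (nP H (Or.inl rfl))
  exact ⟨_, (this.comp_equiv Θ).equiv_comp
    (freeGroupCongr (Fintype.equivOfCardEq (by simp) : Option Unit ≃ Fin 2))⟩

lemma countable_freeGroup [Countable J] : Countable (FreeGroup J) := by
  classical
  exact (toWord_injective (α := J)).countable

/-- The same for any countable free group, if it is not cyclic. -/
theorem exists_lifts_of_isFreeGroup {G : Type*} [Group G] [IsFreeGroup G] [Countable G]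
    (hG : ¬ IsCyclic G) {H K : Subgroup G} (hH : H.FG) (hK : K.FG) (iH : H.index = 0)
    (iK : K.index = 0) : ∃ ρ : G →* FreeGroup (Fin 2), Lifts ρ H K := by
  let e := IsFreeGroup.toFreeGroup G
  have : Countable (IsFreeGroup.Generators G) :=
    (e.symm.injective.comp (of_injective)).countable
  have : Nontrivial (IsFreeGroup.Generators G) := by
    by_contra hn
    rw [not_nontrivial_iff_subsingleton] at hn
    refine hG ?_
    suffices IsCyclic (FreeGroup (IsFreeGroup.Generators G)) from
      isCyclic_of_surjective e.symm e.symm.surjective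
    rcases isEmpty_or_nonempty (IsFreeGroup.Generators G) with h | ⟨⟨a⟩⟩
    · infer_instance
    · have := @Unique.mk' (IsFreeGroup.Generators G) ⟨a⟩ _
      have := (FreeGroup.mulEquivIntOfUnique (α := IsFreeGroup.Generators G))
      exact isCyclic_of_surjective this.symm this.symm.surjective
  have idx : ∀ {M : Subgroup G}, M.index = 0 → (M.map e.toMonoidHom).index = 0 := by
    intro M hM
    rw [← hM]
    exact Subgroup.index_map_equiv M e
  obtain ⟨ρ, hρ⟩ := exists_lifts_freeGroup (fg_map hH e.toMonoidHom) (fg_map hK e.toMonoidHom)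
    (idx iH) (idx iK)
  exact ⟨_, hρ.comp_equiv e⟩

end Exists
end FreeGroup.GenJoin

/-! ### Transport of double coset representatives -/

namespace FreeGroup.GenJoin

section Assembly

/-- Commuting elements of a free group have a common power, which is nontrivial unless one of them
is trivial. -/
lemma exists_common_power {G : Type*} [Group G] [IsFreeGroup G] {c y : G} (hcy : c * y = y * c)
    (hy : y ≠ 1) : ∃ m n : ℤ, y ^ m = c ^ n ∧ (y ^ m = 1 → c = 1) := by
  let A := Subgroup.closure ({c, y} : Set G)
  have hcA : c ∈ A := Subgroup.subset_closure (by simp)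
  have hyA : y ∈ A := Subgroup.subset_closure (by simp)
  have hcomm : ∀ a b : A, a * b = b * a := by
    have : IsMulCommutative A := Subgroup.isMulCommutative_closure (by
      rintro a (rfl | rfl) b (rfl | rfl) <;> simp [hcy])
    exact fun a b => mul_comm' a b
  let e := IsFreeGroup.toFreeGroup A
  have hsub : Subsingleton (IsFreeGroup.Generators A) := by
    classical
    refine ⟨fun a b => ?_⟩
    have h := hcomm (e.symm (of a)) (e.symm (of b))
    rw [← _root_.map_mul, ← _root_.map_mul] at h
    have h := congrArg toWord (e.symm.injective h)
    by_contra hab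
    simp [toWord_mul, hab, Ne.symm hab] at h
  rcases isEmpty_or_nonempty (IsFreeGroup.Generators A) with h | ⟨⟨a⟩⟩
  · refine (hy ?_).elim
    have : (⟨y, hyA⟩ : A) = 1 := e.injective (Subsingleton.elim _ _)
    exact congrArg Subtype.val this
  · have := @Unique.mk' (IsFreeGroup.Generators A) ⟨a⟩ _
    let E : A ≃* Multiplicative ℤ :=
      e.trans (FreeGroup.mulEquivIntOfUnique (α := IsFreeGroup.Generators A))
    have hE : ∀ (x : A) (n : ℤ), Multiplicative.toAdd (E (x ^ n)) = n * Multiplicative.toAdd (E x) := by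
      intro x n; simp [_root_.map_zpow]
    have hn : Multiplicative.toAdd (E ⟨y, hyA⟩) ≠ 0 := by
      intro h
      have : E ⟨y, hyA⟩ = E 1 := by rw [_root_.map_one]; exact h
      exact hy (congrArg Subtype.val (E.injective this))
    refine ⟨Multiplicative.toAdd (E ⟨c, hcA⟩), Multiplicative.toAdd (E ⟨y, hyA⟩), ?_, ?_⟩
    · have : (⟨y, hyA⟩ : A) ^ Multiplicative.toAdd (E ⟨c, hcA⟩) =
          (⟨c, hcA⟩ : A) ^ Multiplicative.toAdd (E ⟨y, hyA⟩) := by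
        apply E.injective
        apply Multiplicative.toAdd.injective
        rw [hE, hE, mul_comm]
      exact congrArg Subtype.val this
    · intro h
      have h1 : (⟨y, hyA⟩ : A) ^ Multiplicative.toAdd (E ⟨c, hcA⟩) = 1 := Subtype.ext h
      have h2 := hE ⟨y, hyA⟩ (Multiplicative.toAdd (E ⟨c, hcA⟩))
      rw [h1, _root_.map_one] at h2
      have h3 := (mul_eq_zero.1 h2.symm).resolve_right hn
      have : E ⟨c, hcA⟩ = E 1 := by rw [_root_.map_one]; exact h3
      exact congrArg Subtype.val (E.injective this)

lemma mem_conjSubgroup {G : Type*} [Group G] {g x : G} {K : Subgroup G} :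
    x ∈ conjSubgroup g K ↔ ∃ k ∈ K, g * k * g⁻¹ = x := by
  simp [conjSubgroup, Subgroup.mem_map]

lemma inf_conj_ne_bot {G : Type*} [Group G] {g : G} {H K : Subgroup G} :
    H ⊓ conjSubgroup g K ≠ ⊥ ↔ ∃ h ∈ H, ∃ k ∈ K, h ≠ 1 ∧ h = g * k * g⁻¹ := by
  rw [Subgroup.ne_bot_iff_exists_ne_one]
  constructor
  · rintro ⟨⟨x, hx, hx'⟩, hx1⟩
    obtain ⟨k, hk, rfl⟩ := mem_conjSubgroup.1 hx'
    exact ⟨_, hx, k, hk, fun h => hx1 (Subtype.ext h), rfl⟩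
  · rintro ⟨h, hh, k, hk, h1, h2⟩
    exact ⟨⟨h, hh, mem_conjSubgroup.2 ⟨k, hk, h2.symm⟩⟩, fun h => h1 (congrArg Subtype.val h)⟩

variable {G G' : Type*} [Group G] [Group G'] {ρ : G →* G'} {H K : Subgroup G} {S : Set G}

/-- The conjugator provided by `Lifts` is the only one in its fibre. -/
lemma Lifts.eq_of_conj [IsFreeGroup G] (hρ : Lifts ρ H K) {s x h k : G} (hk : k ∈ K)
    (h1 : h ≠ 1) (hs : h = s * k * s⁻¹) (hx : h = x * k * x⁻¹) (hsx : ρ s = ρ x) : s = x := by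
  have hk1 : k ≠ 1 := by
    rintro rfl
    exact h1 (by simpa using hs)
  have hc : (s⁻¹ * x) * k = k * (s⁻¹ * x) := by
    have e : s * k * s⁻¹ = x * k * x⁻¹ := hs.symm.trans hx
    calc (s⁻¹ * x) * k = s⁻¹ * (x * k * x⁻¹) * x := by group
      _ = s⁻¹ * (s * k * s⁻¹) * x := by rw [e]
      _ = k * (s⁻¹ * x) := by group
  obtain ⟨m, n, hmn, hm⟩ := exists_common_power hc hk1
  have : s⁻¹ * x = 1 := hm (hρ.2.2.1 _ (K.zpow_mem hk m) (by
    rw [hmn, _root_.map_zpow, _root_.map_mul, _root_.map_inv, hsx]; simp))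
  exact (inv_mul_eq_one.1 this)

/-- Every representative is the uniform lift of its image. -/
lemma Lifts.rep_conj [IsFreeGroup G] (hρ : Lifts ρ H K) {s : G} (hs : H ⊓ conjSubgroup s K ≠ ⊥)
    {h k : G} (hh : h ∈ H) (hk : k ∈ K) (hhk : ρ h = ρ s * ρ k * (ρ s)⁻¹) : h = s * k * s⁻¹ := by
  obtain ⟨h₀, hh₀, k₀, hk₀, h1, h2⟩ := inf_conj_ne_bot.1 hs
  have e : ρ h₀ = ρ s * ρ k₀ * (ρ s)⁻¹ := by simp [h2, _root_.map_mul]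
  obtain ⟨x, hx, hx'⟩ := hρ.2.2.2 (ρ s) ⟨h₀, hh₀, k₀, hk₀, h1, e⟩
  have : s = x := hρ.eq_of_conj hk₀ h1 h2 (hx' _ hh₀ _ hk₀ e) hx.symm
  rw [this]
  exact hx' h hh k hk hhk

lemma inf_ne_bot_of_dosetEq {a b : G} (h : DosetEq H K a b) (ha : H ⊓ conjSubgroup a K ≠ ⊥) :
    H ⊓ conjSubgroup b K ≠ ⊥ := by
  obtain ⟨h, hh, k, hk, rfl⟩ := h
  obtain ⟨h₀, hh₀, k₀, hk₀, h1, rfl⟩ := inf_conj_ne_bot.1 ha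
  refine inf_conj_ne_bot.2 ⟨h * (a * k₀ * a⁻¹) * h⁻¹, H.mul_mem (H.mul_mem hh hh₀) (H.inv_mem hh),
    k⁻¹ * k₀ * k, K.mul_mem (K.mul_mem (K.inv_mem hk) hk₀) hk, ?_, by group⟩
  rwa [Ne, conj_eq_one_iff]

/-- Elements of the same fibre with nontrivial intersections are equal. -/
lemma Lifts.eq_of_map_eq [IsFreeGroup G] (hρ : Lifts ρ H K) {a b : G}
    (ha : H ⊓ conjSubgroup a K ≠ ⊥) (hb : H ⊓ conjSubgroup b K ≠ ⊥) (hab : ρ a = ρ b) : a = b := by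
  obtain ⟨h, hh, k, hk, h1, h2⟩ := inf_conj_ne_bot.1 ha
  refine hρ.eq_of_conj hk h1 h2 (hρ.rep_conj hb hh hk ?_) hab
  rw [h2, ← hab]; simp [_root_.map_mul]

theorem Lifts.isDCRep [IsFreeGroup G] (hρ : Lifts ρ H K) (hS : IsDCRep H K S) :
    IsDCRep (H.map ρ) (K.map ρ) (ρ '' S) := by
  refine ⟨?_, ?_, ?_⟩
  · rintro _ ⟨s, hs, rfl⟩
    obtain ⟨h, hh, k, hk, h1, h2⟩ := inf_conj_ne_bot.1 (hS.1 s hs)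
    exact inf_conj_ne_bot.2 ⟨ρ h, ⟨h, hh, rfl⟩, ρ k, ⟨k, hk, rfl⟩, fun e => h1 (hρ.2.1 h hh e),
      by simp [h2, _root_.map_mul]⟩
  · rintro _ ⟨s, hs, rfl⟩ _ ⟨s', hs', rfl⟩ hne ⟨_, ⟨h, hh, rfl⟩, _, ⟨k, hk, rfl⟩, he⟩
    have hd : DosetEq H K s (h * s * k) := ⟨h, hh, k, hk, rfl⟩
    have : s' = h * s * k := hρ.eq_of_map_eq (hS.1 s' hs') (inf_ne_bot_of_dosetEq hd (hS.1 s hs))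
      (by simpa [_root_.map_mul] using he)
    rw [← this] at hd
    exact hS.2.1 s hs s' hs' (fun e => hne (by rw [e])) hd
  · intro g hg
    obtain ⟨_, ⟨h, hh, rfl⟩, _, ⟨k, hk, rfl⟩, h1, h2⟩ := inf_conj_ne_bot.1 hg
    have hh1 : h ≠ 1 := by rintro rfl; exact h1 (_root_.map_one ρ)
    obtain ⟨x, rfl, hx⟩ := hρ.2.2.2 g ⟨h, hh, k, hk, hh1, h2⟩
    obtain ⟨s, hs, a, ha, b, hb, e⟩ := hS.2.2 x
      (inf_conj_ne_bot.2 ⟨h, hh, k, hk, hh1, hx h hh k hk h2⟩)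
    exact ⟨ρ s, ⟨s, hs, rfl⟩, ρ a, ⟨a, ha, rfl⟩, ρ b, ⟨b, hb, rfl⟩, by simp [e, _root_.map_mul]⟩

lemma Lifts.map_inf [IsFreeGroup G] (hρ : Lifts ρ H K) {s : G} (hs : H ⊓ conjSubgroup s K ≠ ⊥) :
    H.map ρ ⊓ conjSubgroup (ρ s) (K.map ρ) = (H ⊓ conjSubgroup s K).map ρ := by
  ext x
  constructor
  · rintro ⟨⟨h, hh, rfl⟩, hx⟩
    obtain ⟨_, ⟨k, hk, rfl⟩, e⟩ := mem_conjSubgroup.1 hx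
    exact ⟨h, ⟨hh, mem_conjSubgroup.2 ⟨k, hk, (hρ.rep_conj hs hh hk e.symm).symm⟩⟩, rfl⟩
  · rintro ⟨h, ⟨hh, hx⟩, rfl⟩
    obtain ⟨k, hk, rfl⟩ := mem_conjSubgroup.1 hx
    exact ⟨⟨_, hh, rfl⟩, mem_conjSubgroup.2 ⟨_, ⟨k, hk, rfl⟩, by simp [_root_.map_mul]⟩⟩

lemma mapEquiv (M : Subgroup G) (hM : ∀ x ∈ M, ρ x = 1 → x = 1) : Nonempty (M.map ρ ≃* M) := by
  have inj : Function.Injective (ρ.subgroupMap M) := by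
    rw [injective_iff_map_eq_one]
    rintro ⟨x, hx⟩ h
    exact Subtype.ext (hM x hx (congrArg Subtype.val h))
  exact ⟨(MulEquiv.ofBijective (ρ.subgroupMap M) ⟨inj, ρ.subgroupMap_surjective M⟩).symm⟩

/-- A nontrivial subgroup of a cyclic group has finite index. -/
lemma index_ne_zero_of_isCyclic [IsCyclic G] (hH : H ≠ ⊥) : H.index ≠ 0 := by
  obtain ⟨⟨x, hx⟩, hx1⟩ := H.ne_bot_iff_exists_ne_one.1 hH
  obtain ⟨g, hg⟩ := IsCyclic.exists_generator (α := G)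
  obtain ⟨n, rfl⟩ := hg x
  have hn : n ≠ 0 := by
    rintro rfl
    exact hx1 (Subtype.ext (by simp))
  have : Finite (G ⧸ H) := by
    have hf := (Set.finite_Ico (0 : ℤ) |n|).to_subtype
    refine Finite.of_surjective (fun i : Set.Ico (0 : ℤ) |n| => ((g ^ (i : ℤ) : G) : G ⧸ H)) ?_
    intro q
    obtain ⟨y, rfl⟩ := QuotientGroup.mk_surjective q
    obtain ⟨m, rfl⟩ := hg y
    refine ⟨⟨m % n, Int.emod_nonneg _ hn, Int.emod_lt_abs _ hn⟩, ?_⟩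
    refine QuotientGroup.eq.2 ?_
    have : (g ^ (m % n))⁻¹ * g ^ m = (g ^ n) ^ (m / n) := by
      rw [← zpow_neg, ← zpow_add, ← zpow_mul]
      congr 1
      have := Int.emod_add_mul_ediv m n
      linarith
    change (g ^ (m % n))⁻¹ * g ^ m ∈ H
    rw [this]
    exact H.zpow_mem hx _
  exact Nat.card_ne_zero.2 ⟨inferInstance, this⟩

end Assembly

section Restrict
variable {G : Type*} [Group G] {H K L : Subgroup G} {S : Set G}

lemma fg_subgroupOf (hHL : H ≤ L) (hH : H.FG) : (H.subgroupOf L).FG := by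
  have h := fg_map ((Group.fg_iff_subgroup_fg H).2 hH).out (Subgroup.inclusion hHL)
  rwa [← MonoidHom.range_eq_map, Subgroup.inclusion_range] at h

lemma subgroupOf_inf_conj (s : L) :
    H.subgroupOf L ⊓ conjSubgroup s (K.subgroupOf L) =
      (H ⊓ conjSubgroup (s : G) K).subgroupOf L := by
  ext x
  simp only [Subgroup.mem_inf, Subgroup.mem_subgroupOf, mem_conjSubgroup]
  refine and_congr_right fun _ => ⟨?_, ?_⟩
  · rintro ⟨k, hk, rfl⟩
    exact ⟨k, hk, rfl⟩
  · rintro ⟨k, hk, e⟩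
    have hkL : k ∈ L := by
      have : k = (s : G)⁻¹ * x * s := by rw [← e]; group
      rw [this]
      exact L.mul_mem (L.mul_mem (L.inv_mem s.2) x.2) s.2
    exact ⟨⟨k, hkL⟩, hk, Subtype.ext e⟩

lemma isDCRep_restrict (hS : IsDCRep H K S) (hHL : H ≤ L) (hKL : K ≤ L) (hSL : S ⊆ L) :
    IsDCRep (H.subgroupOf L) (K.subgroupOf L) (((↑) : L → G) ⁻¹' S) := by
  refine ⟨?_, ?_, ?_⟩
  · intro s hs
    obtain ⟨h, hh, k, hk, h1, h2⟩ := inf_conj_ne_bot.1 (hS.1 s hs)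
    exact inf_conj_ne_bot.2 ⟨⟨h, hHL hh⟩, hh, ⟨k, hKL hk⟩, hk,
      fun e => h1 (congrArg Subtype.val e), Subtype.ext h2⟩
  · rintro s hs s' hs' hne ⟨h, hh, k, hk, e⟩
    exact hS.2.1 s hs s' hs' (fun e => hne (Subtype.ext e))
      ⟨h, hh, k, hk, congrArg Subtype.val e⟩
  · intro g hg
    obtain ⟨h, hh, k, hk, h1, h2⟩ := inf_conj_ne_bot.1 hg
    obtain ⟨s, hs, a, ha, b, hb, e⟩ := hS.2.2 g (inf_conj_ne_bot.2 ⟨h, hh, k, hk,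
      fun e => h1 (Subtype.ext e), congrArg Subtype.val h2⟩)
    exact ⟨⟨s, hSL hs⟩, hs, ⟨a, hHL ha⟩, ha, ⟨b, hKL hb⟩, hb, Subtype.ext e⟩

end Restrict
end FreeGroup.GenJoin

open FreeGroup.GenJoin

theorem generalized_join_realized_in_rank_two
    (m : ℕ) (hm : 2 ≤ m)
    (H K : Subgroup (FreeGroup (Fin m))) (hH : H.FG) (hK : K.FG)
    (S : Set (FreeGroup (Fin m))) (hS : IsDCRep H K S)
    (L : Subgroup (FreeGroup (Fin m)))
    (hL : L = Subgroup.closure ((H : Set (FreeGroup (Fin m))) ∪ (K : Set (FreeGroup (Fin m))) ∪ S))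
    (hHL : (H.subgroupOf L).index = 0)
    (hKL : (K.subgroupOf L).index = 0) :
    ∃ (H' K' : Subgroup (FreeGroup (Fin 2))) (f : S → FreeGroup (Fin 2)),
      Function.Injective f ∧
      Nonempty (H' ≃* H) ∧
      Nonempty (K' ≃* K) ∧
      IsDCRep H' K' (Set.range f) ∧
      (∀ s : S, Nonempty
        ((H' ⊓ conjSubgroup (f s) K' : Subgroup (FreeGroup (Fin 2))) ≃*
          (H ⊓ conjSubgroup (s : FreeGroup (Fin m)) K : Subgroup (FreeGroup (Fin m))))) ∧
      Subgroup.closure ((H' : Set (FreeGroup (Fin 2))) ∪ (K' : Set (FreeGroup (Fin 2))) ∪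
        Set.range f) = ⊤ := by
  have leH : H ≤ L := by
    rw [hL]; exact fun x hx => Subgroup.subset_closure (Or.inl (Or.inl hx))
  have leK : K ≤ L := by
    rw [hL]; exact fun x hx => Subgroup.subset_closure (Or.inl (Or.inr hx))
  have leS : S ⊆ L := by
    rw [hL]; exact fun x hx => Subgroup.subset_closure (Or.inr hx)
  have hcyc : ¬ IsCyclic L := by
    intro hc
    have bH : H.subgroupOf L = ⊥ := by
      by_contra h; exact index_ne_zero_of_isCyclic h hHL
    have bK : K.subgroupOf L = ⊥ := by
      by_contra h; exact index_ne_zero_of_isCyclic h hKL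
    have bH' : H = ⊥ := by
      rw [Subgroup.subgroupOf_eq_bot] at bH
      exact disjoint_self.1 (bH.mono_right leH)
    have bK' : K = ⊥ := by
      rw [Subgroup.subgroupOf_eq_bot] at bK
      exact disjoint_self.1 (bK.mono_right leK)
    have bS : S = ∅ := by
      rw [Set.eq_empty_iff_forall_notMem]
      exact fun s hs => hS.1 s hs (by rw [bH', bot_inf_eq])
    have : L = ⊥ := by
      rw [hL, bH', bK', bS]; simp
    subst this
    rw [bH', Subgroup.bot_subgroupOf, Subgroup.index_bot] at hHL
    simp at hHL
  have : Countable (FreeGroup (Fin m)) := countable_freeGroup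
  obtain ⟨ρ, hρ⟩ := exists_lifts_of_isFreeGroup hcyc (fg_subgroupOf leH hH)
    (fg_subgroupOf leK hK) hHL hKL
  have hS' := isDCRep_restrict hS leH leK leS
  refine ⟨(H.subgroupOf L).map ρ, (K.subgroupOf L).map ρ, fun s => ρ ⟨s, leS s.2⟩, ?_, ?_, ?_, ?_,
    ?_, ?_⟩
  · intro s s' h
    have := hρ.eq_of_map_eq (hS'.1 ⟨s, leS s.2⟩ s.2) (hS'.1 ⟨s', leS s'.2⟩ s'.2) h
    exact Subtype.ext (congrArg (Subtype.val : L → _) this)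
  · exact (mapEquiv _ hρ.2.1).map fun e => e.trans (Subgroup.subgroupOfEquivOfLe leH)
  · exact (mapEquiv _ hρ.2.2.1).map fun e => e.trans (Subgroup.subgroupOfEquivOfLe leK)
  · convert hρ.isDCRep hS' using 1
    ext x
    constructor
    · rintro ⟨s, rfl⟩
      exact ⟨⟨s, leS s.2⟩, s.2, rfl⟩
    · rintro ⟨s, hs, rfl⟩
      exact ⟨⟨s, hs⟩, rfl⟩
  · intro s
    rw [hρ.map_inf (hS'.1 ⟨s, leS s.2⟩ s.2), subgroupOf_inf_conj]
    refine (mapEquiv _ fun x hx => hρ.2.1 x ?_).map fun e =>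
      e.trans (Subgroup.subgroupOfEquivOfLe (inf_le_left.trans leH))
    exact hx.1
  · rw [eq_top_iff]
    intro y _
    obtain ⟨⟨x, hx⟩, rfl⟩ := hρ.1 y
    set T := Subgroup.closure (((H.subgroupOf L).map ρ : Set (FreeGroup (Fin 2))) ∪
      ((K.subgroupOf L).map ρ : Set (FreeGroup (Fin 2))) ∪
        Set.range fun s : S => ρ ⟨s, leS s.2⟩) with hT
    have hle : L ≤ (T.comap ρ).map L.subtype := by
      conv_lhs => rw [hL]
      rw [Subgroup.closure_le]
      rintro z ((hz | hz) | hz)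
      · exact ⟨⟨z, leH hz⟩, Subgroup.subset_closure (Or.inl (Or.inl ⟨_, hz, rfl⟩)), rfl⟩
      · exact ⟨⟨z, leK hz⟩, Subgroup.subset_closure (Or.inl (Or.inr ⟨_, hz, rfl⟩)), rfl⟩
      · exact ⟨⟨z, leS hz⟩, Subgroup.subset_closure (Or.inr ⟨⟨z, hz⟩, rfl⟩), rfl⟩
    obtain ⟨x', hx', e⟩ := hle hx
    have : x' = ⟨x, hx⟩ := Subtype.ext e
    rw [← this]
    exact hx'
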